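/- (Estimate (3.7) in the proof of Proposition 3.8.) Let (Ω_k) be a sequence of nonempty bounded open convex subsets of ℝ² with |Ω_k| = 1 for all k and diam(Ω_k) → +∞. Then limsup_{k→∞} λ₁(Ω_k)·μ₁(Ω_k) ≤ π⁴; in particular, since π⁴ < π²·(j'₁₁)²·j₀₁² = F(𝔻), no sequence of unit-area convex sets with diameters tending to infinity can be a maximizing sequence for F(Ω) := |Ω|²·λ₁(Ω)·μ₁(Ω). -/

import Mathlib

open MeasureTheory Filter Set Real RealInnerProductSpace

noncomputable section

abbrev E2 : Type := EuclideanSpace ℝ (Fin 2)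

/-- First Dirichlet eigenvalue, variational characterization. -/
noncomputable def dEig1 (Ω : Set E2) : ℝ :=
  sInf { R : ℝ | ∃ u : E2 → ℝ, ContDiff ℝ (⊤ : ℕ∞) u ∧ HasCompactSupport u ∧
    tsupport u ⊆ Ω ∧ (∫ x, (u x)^2) ≠ 0 ∧
    R = (∫ x, ‖fderiv ℝ u x‖^2) / (∫ x, (u x)^2) }

/-- First nontrivial Neumann eigenvalue, variational characterization. -/
noncomputable def nEig1 (Ω : Set E2) : ℝ :=
  sInf { R : ℝ | ∃ u : E2 → ℝ, ContDiff ℝ (⊤ : ℕ∞) u ∧ (∫ x in Ω, u x) = 0 ∧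
    (∫ x in Ω, (u x)^2) ≠ 0 ∧
    R = (∫ x in Ω, ‖fderiv ℝ u x‖^2) / (∫ x in Ω, (u x)^2) }

/-- The open unit disc in the plane. -/
def unitDisc : Set E2 := Metric.ball 0 1

/-!
Let `F(Ω) = |Ω|² λ₁(Ω) μ₁(Ω)`, which is invariant under isometries and scaling.

*Neumann.* Let `M` be the longest vertical chord of `Ω`. The first coordinate of a uniform random
point of `Ω` has a density at most `M / |Ω|`, so its distribution function is `M / |Ω|`-Lipschitz
and transports `Ω` to the unit interval; the test function `cos (π t)` there gives
`μ₁(Ω) ≤ (π M / |Ω|)²`.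

*Dirichlet.* Rotate `Ω` so that its longest direction is horizontal. The triangle spanned by an
almost longest vertical chord, of length `m`, and a far away point of `Ω` contains a parallelogram
whose vertical side is almost `m` and whose other side is nearly horizontal and, when
`|Ω| / diam(Ω)²` is small, much longer than `m`. The product of sines on it gives
`λ₁(Ω) ≤ (1 + o(1)) π² / m²`, hence `F(Ω) ≤ (1 + o(1)) π⁴`.

*The disc.* It is enough that `λ₁(𝔻) ≥ 5` and `μ₁(𝔻) ≥ 2`, because `10 > π²`. The first bound is
Barta's inequality for `φ = (1 - |x|²) (4 - |x|²)`, which satisfies `-Δφ ≥ 5 φ`. For the second,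
split a function into parts even or odd in each coordinate: an odd part vanishes at the midpoints of
parallel chords, which gives a Poincaré inequality on each chord, and an even-even part takes the
same value at the four diagonal points of each circle, which gives one on each quadrant.
-/

/-! ### Second moments and averages -/

section Averages

variable {α : Type*} [MeasurableSpace α] {μ : Measure α} [IsFiniteMeasure μ]

theorem integral_sub_const_sq {f : α → ℝ} (hf : MemLp f 2 μ) (c : ℝ) :
    ∫ x, (f x - c) ^ 2 ∂μ = ∫ x, f x ^ 2 ∂μ - 2 * c * ∫ x, f x ∂μ + c ^ 2 * μ.real univ := by
  have hlin : Integrable (fun x => 2 * c * f x) μ := (hf.integrable one_le_two).const_mul _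
  have hexpand : ∀ x, (f x - c) ^ 2 = f x ^ 2 - 2 * c * f x + c ^ 2 := fun x => by ring
  simp_rw [hexpand]
  rw [integral_add (by exact hf.integrable_sq.sub hlin) (integrable_const _),
    integral_sub hf.integrable_sq hlin, integral_const_mul, integral_const, smul_eq_mul]
  ring

variable [NeZero μ]

theorem average_mul_measureReal_univ (f : α → ℝ) :
    (⨍ x, f x ∂μ) * μ.real univ = ∫ x, f x ∂μ := by
  have hμ : 0 < μ.real univ := measureReal_univ_pos
  rw [average_eq, smul_eq_mul]
  field_simp

theorem integral_sub_const_sq_eq_add {f : α → ℝ} (hf : MemLp f 2 μ) (c : ℝ) :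
    ∫ x, (f x - c) ^ 2 ∂μ =
      ∫ x, (f x - ⨍ y, f y ∂μ) ^ 2 ∂μ + μ.real univ * ((⨍ y, f y ∂μ) - c) ^ 2 := by
  rw [integral_sub_const_sq hf, integral_sub_const_sq hf, ← average_mul_measureReal_univ f]
  ring

theorem measureReal_univ_mul_average_sq_le {f : α → ℝ} (hf : MemLp f 2 μ) :
    μ.real univ * (⨍ x, f x ∂μ) ^ 2 ≤ ∫ x, f x ^ 2 ∂μ := by
  have hsplit := integral_sub_const_sq_eq_add hf 0
  simp only [sub_zero] at hsplit
  have hvar : 0 ≤ ∫ x, (f x - ⨍ y, f y ∂μ) ^ 2 ∂μ := integral_nonneg fun x => sq_nonneg _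
  linarith

theorem integral_sub_average_sq_le_add {p q : α → ℝ} (hp : MemLp p 2 μ) (hq : MemLp q 2 μ) (k : ℝ) :
    ∫ x, (p x - ⨍ y, q y ∂μ) ^ 2 ∂μ ≤ ∫ x, (p x - k) ^ 2 ∂μ + ∫ x, (p x - q x) ^ 2 ∂μ := by
  have havg : (⨍ x, (p - q) x ∂μ) = (⨍ x, p x ∂μ) - ⨍ x, q x ∂μ := by
    simp only [average_eq, Pi.sub_apply, smul_eq_mul]
    rw [integral_sub (hp.integrable one_le_two) (hq.integrable one_le_two), mul_sub]
  have hdiff := measureReal_univ_mul_average_sq_le (hp.sub hq)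
  rw [havg] at hdiff
  simp only [Pi.sub_apply] at hdiff
  have hk : 0 ≤ μ.real univ * ((⨍ y, p y ∂μ) - k) ^ 2 := by positivity
  linarith [integral_sub_const_sq_eq_add hp k, integral_sub_const_sq_eq_add hp (⨍ y, q y ∂μ)]

end Averages

section BoundedSets

variable {X : Type*} [MetricSpace X] [ProperSpace X] [MeasurableSpace X]
  [OpensMeasurableSpace X] {μ : Measure X} [IsFiniteMeasureOnCompacts μ] {s : Set X}

theorem integrableOn_of_continuous_of_isBounded {f : X → ℝ} (hf : Continuous f)
    (hs : Bornology.IsBounded s) : IntegrableOn f s μ :=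
  (hf.continuousOn.integrableOn_compact hs.isCompact_closure).mono_set subset_closure

theorem memLp_two_restrict_of_continuous_of_isBounded {f : X → ℝ} (hf : Continuous f)
    (hs : Bornology.IsBounded s) : MemLp f 2 (μ.restrict s) :=
  (memLp_two_iff_integrable_sq hf.aestronglyMeasurable).2
    (integrableOn_of_continuous_of_isBounded (hf.pow 2) hs)

theorem setIntegral_pos_of_continuous_of_isBounded [μ.IsOpenPosMeasure] {f : X → ℝ}
    (hf : Continuous f) (hf0 : ∀ x, 0 ≤ f x) (ho : IsOpen s) (hs : Bornology.IsBounded s) {x : X}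
    (hx : x ∈ s) (hfx : f x ≠ 0) : 0 < ∫ y in s, f y ∂μ := by
  rw [setIntegral_pos_iff_support_of_nonneg_ae (ae_of_all _ hf0)
    (integrableOn_of_continuous_of_isBounded hf hs)]
  exact ((hf.isOpen_support).inter ho).measure_pos μ ⟨x, hfx, hx⟩

end BoundedSets

/-! ### Barta's inequality -/

section Barta

theorem integrable_mul_of_tsupport_subset {X : Type*} [MetricSpace X] [MeasurableSpace X]
    [OpensMeasurableSpace X] {μ : Measure X} [IsFiniteMeasureOnCompacts μ] {U : Set X}
    {h k : X → ℝ} (hh : Continuous h) (hc : HasCompactSupport h) (hU : tsupport h ⊆ U)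
    (hk : ContinuousOn k U) : Integrable (fun x => h x * k x) μ := by
  rw [← integrableOn_iff_integrable_of_support_subset (s := tsupport h)]
  · exact (hh.continuousOn.mul (hk.mono hU)).integrableOn_compact hc
  · exact (Function.support_mul_subset_left h k).trans (subset_tsupport h)

variable {E : Type*} [NormedAddCommGroup E] [InnerProductSpace ℝ E] [FiniteDimensional ℝ E]
  [MeasurableSpace E] [BorelSpace E] {μ : Measure E} [μ.IsAddHaarMeasure] {U : Set E}

theorem integral_mul_fderiv_eq_neg_of_tsupport_subset {w g : E → ℝ} (hw : ContDiff ℝ 1 w)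
    (hc : HasCompactSupport w) (hUo : IsOpen U) (hU : tsupport w ⊆ U) (hg : ContDiffOn ℝ 1 g U)
    (v : E) : ∫ x, w x * fderiv ℝ g x v ∂μ = -∫ x, fderiv ℝ w x v * g x ∂μ := by
  have hdg : ContinuousOn (fun x => fderiv ℝ g x v) U :=
    (hg.continuousOn_fderiv_of_isOpen hUo le_rfl).clm_apply continuousOn_const
  refine integral_mul_fderiv_eq_neg_fderiv_mul_of_integrable ?_
    (integrable_mul_of_tsupport_subset hw.continuous hc hU hdg)
    (integrable_mul_of_tsupport_subset hw.continuous hc hU hg.continuousOn)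
    (fun x _ => hw.differentiable one_ne_zero x)
    fun x hx => (hg.contDiffAt (hUo.mem_nhds (hU hx))).differentiableAt one_ne_zero
  exact integrable_mul_of_tsupport_subset
    ((hw.continuous_fderiv one_ne_zero).clm_apply continuous_const) (hc.fderiv_apply (𝕜 := ℝ) v)
    ((tsupport_fderiv_apply_subset ℝ v).trans hU) hg.continuousOn

variable {u : E → ℝ}

theorem integral_sq_mul_fderiv_eq_neg (hu : ContDiff ℝ 1 u) (hc : HasCompactSupport u)
    (hUo : IsOpen U) (hU : tsupport u ⊆ U) {g : E → ℝ} (hg : ContDiffOn ℝ 1 g U) (v : E) :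
    ∫ x, u x ^ 2 * fderiv ℝ g x v ∂μ = -∫ x, u x * (2 * fderiv ℝ u x v * g x) ∂μ := by
  have hfderiv_sq : ∀ x, fderiv ℝ (fun y => u y ^ 2) x v * g x =
      u x * (2 * fderiv ℝ u x v * g x) := fun x => by
    rw [fderiv_fun_pow 2 (hu.differentiable one_ne_zero x)]
    simp only [Nat.add_one_sub_one, pow_one, smul_apply, smul_eq_mul, nsmul_eq_mul,
      Nat.cast_ofNat]
    ring
  rw [integral_mul_fderiv_eq_neg_of_tsupport_subset (hu.pow 2)
    (hc.comp_left (g := fun t : ℝ => t ^ 2) (by simp)) hUo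
    ((tsupport_comp_subset (g := fun t : ℝ => t ^ 2) (by simp) u).trans hU) hg v]
  simp_rw [hfderiv_sq]

theorem neg_integral_sq_mul_le_integral_fderiv_sq (hu : ContDiff ℝ 1 u)
    (hc : HasCompactSupport u) (hUo : IsOpen U) (hU : tsupport u ⊆ U) {g : E → ℝ}
    (hg : ContDiffOn ℝ 1 g U) (v : E) :
    -∫ x, u x ^ 2 * (fderiv ℝ g x v + g x ^ 2) ∂μ ≤ ∫ x, fderiv ℝ u x v ^ 2 ∂μ := by
  have hdu : Continuous fun x => fderiv ℝ u x v :=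
    (hu.continuous_fderiv one_ne_zero).clm_apply continuous_const
  have hdg : ContinuousOn (fun x => fderiv ℝ g x v) U :=
    (hg.continuousOn_fderiv_of_isOpen hUo le_rfl).clm_apply continuousOn_const
  have hcdu : HasCompactSupport fun x => fderiv ℝ u x v := hc.fderiv_apply (𝕜 := ℝ) v
  have hsq : ∀ k : E → ℝ, ContinuousOn k U → Integrable (fun x => u x ^ 2 * k x) μ :=
    fun k => integrable_mul_of_tsupport_subset (hu.continuous.pow 2)
      (hc.comp_left (g := fun t : ℝ => t ^ 2) (by simp))
      ((tsupport_comp_subset (g := fun t : ℝ => t ^ 2) (by simp) u).trans hU)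
  have hcross : Integrable (fun x => u x * (2 * fderiv ℝ u x v * g x)) μ :=
    integrable_mul_of_tsupport_subset hu.continuous hc hU
      ((continuous_const.mul hdu).continuousOn.mul hg.continuousOn)
  have hgrad : Integrable (fun x => fderiv ℝ u x v ^ 2) μ :=
    Continuous.integrable_of_hasCompactSupport (by fun_prop)
      (hcdu.comp_left (g := fun t : ℝ => t ^ 2) (by simp))
  have hweight : Integrable (fun x => u x ^ 2 * (fderiv ℝ g x v + g x ^ 2)) μ :=
    hsq _ (hdg.add (hg.continuousOn.pow 2))
  have hsquare : ∫ x, (u x ^ 2 * fderiv ℝ g x v + u x * (2 * fderiv ℝ u x v * g x)) ∂μ ≤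
      ∫ x, (fderiv ℝ u x v ^ 2 + u x ^ 2 * (fderiv ℝ g x v + g x ^ 2)) ∂μ :=
    integral_mono ((hsq _ hdg).add hcross) (hgrad.add hweight) fun x => by
      have := sq_nonneg (fderiv ℝ u x v - u x * g x)
      linarith
  rw [integral_add hgrad hweight, integral_add (hsq _ hdg) hcross,
    integral_sq_mul_fderiv_eq_neg hu hc hUo hU hg v, neg_add_cancel] at hsquare
  linarith

theorem neg_integral_sq_mul_div_le_integral_fderiv_sq (hu : ContDiff ℝ 1 u)
    (hc : HasCompactSupport u) (hUo : IsOpen U) (hU : tsupport u ⊆ U) {φ : E → ℝ}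
    (hφ : ContDiffOn ℝ 2 φ U) (hpos : ∀ x ∈ U, 0 < φ x) (v : E) :
    -∫ x, u x ^ 2 * (fderiv ℝ (fderiv ℝ φ) x v v / φ x) ∂μ ≤ ∫ x, fderiv ℝ u x v ^ 2 ∂μ := by
  have hdφ : ContDiffOn ℝ 1 (fderiv ℝ φ) U := hφ.fderiv_of_isOpen hUo (by norm_num)
  have hg : ContDiffOn ℝ 1 (fun x => fderiv ℝ φ x v / φ x) U :=
    (hdφ.clm_apply contDiffOn_const).div (hφ.of_le one_le_two) fun x hx => (hpos x hx).ne'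
  convert neg_integral_sq_mul_le_integral_fderiv_sq (μ := μ) hu hc hUo hU hg v using 4 with x
  by_cases hx : x ∈ U
  · congr 1
    have hφx : HasFDerivAt φ (fderiv ℝ φ x) x :=
      ((hφ.contDiffAt (hUo.mem_nhds hx)).differentiableAt two_ne_zero).hasFDerivAt
    have hdφx : HasFDerivAt (fun y => fderiv ℝ φ y v) ((fderiv ℝ (fderiv ℝ φ) x).flip v) x :=
      (((hdφ.contDiffAt (hUo.mem_nhds hx)).differentiableAt one_ne_zero).hasFDerivAt.clm_apply
        (hasFDerivAt_const v x)).congr_fderiv (by simp)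
    simp_rw [div_eq_mul_inv]
    have hquot : HasFDerivAt (fun y => fderiv ℝ φ y v * (φ y)⁻¹) _ x :=
      hdφx.mul ((hasDerivAt_inv (hpos x hx).ne').comp_hasFDerivAt x hφx)
    rw [hquot.fderiv]
    have := (hpos x hx).ne'
    simp only [neg_smul, smul_neg, add_apply, neg_apply, smul_apply, smul_eq_mul,
      ContinuousLinearMap.flip_apply]
    field_simp
    ring
  · rw [image_eq_zero_of_notMem_tsupport fun hxu => hx (hU hxu)]
    simp only [ne_eq, OfNat.ofNat_ne_zero, not_false_eq_true, zero_pow, zero_mul]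

open scoped Laplacian

theorem mul_integral_sq_le_integral_norm_fderiv_sq {φ : E → ℝ} {c : ℝ} (hUo : IsOpen U)
    (hφ : ContDiffOn ℝ 2 φ U) (hpos : ∀ x ∈ U, 0 < φ x)
    (hsuper : ∀ x ∈ U, Δ φ x ≤ -c * φ x)
    (hu : ContDiff ℝ 1 u) (hc : HasCompactSupport u) (hU : tsupport u ⊆ U) :
    c * ∫ x, u x ^ 2 ∂μ ≤ ∫ x, ‖fderiv ℝ u x‖ ^ 2 ∂μ := by
  set b := stdOrthonormalBasis ℝ E
  have hsq : ∀ k : E → ℝ, ContinuousOn k U → Integrable (fun x => u x ^ 2 * k x) μ :=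
    fun k => integrable_mul_of_tsupport_subset (hu.continuous.pow 2)
      (hc.comp_left (g := fun t : ℝ => t ^ 2) (by simp))
      ((tsupport_comp_subset (g := fun t : ℝ => t ^ 2) (by simp) u).trans hU)
  have hφ'' : ∀ v, ContinuousOn (fun x => fderiv ℝ (fderiv ℝ φ) x v v / φ x) U := fun v =>
    ((((hφ.fderiv_of_isOpen (m := 1) hUo (by norm_num)).continuousOn_fderiv_of_isOpen hUo
      le_rfl).clm_apply continuousOn_const).clm_apply continuousOn_const).div hφ.continuousOn
        fun x hx => (hpos x hx).ne'
  have hgrad : ∀ v, Integrable (fun x => fderiv ℝ u x v ^ 2) μ := fun v =>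
    Continuous.integrable_of_hasCompactSupport
      (((hu.continuous_fderiv one_ne_zero).clm_apply continuous_const).pow 2)
      (HasCompactSupport.comp_left (g := fun t : ℝ => t ^ 2) (hc.fderiv_apply (𝕜 := ℝ) v) (by simp))
  have hlaplace : ∀ x, u x ^ 2 * c ≤
      -∑ i, u x ^ 2 * (fderiv ℝ (fderiv ℝ φ) x (b i) (b i) / φ x) := fun x => by
    by_cases hx : x ∈ U
    · have hΔ : Δ φ x = ∑ i, fderiv ℝ (fderiv ℝ φ) x (b i) (b i) := by
        simp [InnerProductSpace.laplacian_eq_iteratedFDeriv_orthonormalBasis φ b,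
          iteratedFDeriv_two_apply]
      rw [← Finset.mul_sum, ← Finset.sum_div, ← hΔ, ← mul_neg]
      refine mul_le_mul_of_nonneg_left ?_ (sq_nonneg _)
      rw [le_neg, div_le_iff₀ (hpos x hx)]
      exact hsuper x hx
    · simp [image_eq_zero_of_notMem_tsupport fun hxu => hx (hU hxu)]
  calc c * ∫ x, u x ^ 2 ∂μ = ∫ x, u x ^ 2 * c ∂μ := by rw [integral_mul_const, mul_comm]
    _ ≤ ∫ x, -∑ i, u x ^ 2 * (fderiv ℝ (fderiv ℝ φ) x (b i) (b i) / φ x) ∂μ :=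
      integral_mono (hsq _ continuousOn_const)
        (integrable_finsetSum _ fun i _ => hsq _ (hφ'' _)).neg hlaplace
    _ = ∑ i, -∫ x, u x ^ 2 * (fderiv ℝ (fderiv ℝ φ) x (b i) (b i) / φ x) ∂μ := by
      rw [integral_neg, integral_finsetSum _ fun i _ => hsq _ (hφ'' _), Finset.sum_neg_distrib]
    _ ≤ ∑ i, ∫ x, fderiv ℝ u x (b i) ^ 2 ∂μ := Finset.sum_le_sum fun i _ =>
      neg_integral_sq_mul_div_le_integral_fderiv_sq hu hc hUo hU hφ hpos (b i)
    _ = ∫ x, ‖fderiv ℝ u x‖ ^ 2 ∂μ := by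
      simp_rw [b.norm_dual, integral_finsetSum _ fun i _ => hgrad (b i)]

end Barta

section RadialLaplacian

open scoped Laplacian

variable {E : Type*} [NormedAddCommGroup E] [InnerProductSpace ℝ E]

theorem hasFDerivAt_comp_norm_sq {h : ℝ → ℝ} {h' : ℝ} {x : E} (hh : HasDerivAt h h' (‖x‖ ^ 2)) :
    HasFDerivAt (fun y : E => h (‖y‖ ^ 2)) ((2 * h') • innerSL ℝ x) x := by
  refine (hh.comp_hasFDerivAt x (hasStrictFDerivAt_norm_sq x).hasFDerivAt).congr_fderiv ?_
  rw [mul_comm, mul_smul, two_smul, two_smul]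

theorem laplacian_comp_norm_sq [FiniteDimensional ℝ E] {h h' h'' : ℝ → ℝ}
    (hh : ∀ s, HasDerivAt h (h' s) s) (hh' : ∀ s, HasDerivAt h' (h'' s) s) (x : E) :
    Δ (fun y : E => h (‖y‖ ^ 2)) x =
      2 * Module.finrank ℝ E * h' (‖x‖ ^ 2) + 4 * ‖x‖ ^ 2 * h'' (‖x‖ ^ 2) := by
  have hfirst : fderiv ℝ (fun y : E => h (‖y‖ ^ 2)) =
      fun y => (2 * h' (‖y‖ ^ 2)) • innerSL ℝ y :=
    funext fun y => (hasFDerivAt_comp_norm_sq (hh _)).fderiv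
  have hsecond : ∀ v : E, fderiv ℝ (fun y : E => (2 * h' (‖y‖ ^ 2)) • innerSL ℝ y) x v v =
      2 * h' (‖x‖ ^ 2) * ⟪v, v⟫ + 2 * (2 * h'' (‖x‖ ^ 2) * ⟪x, v⟫) * ⟪x, v⟫ := fun v => by
    rw [(((hasFDerivAt_comp_norm_sq (hh' _)).const_mul 2).fun_smul
      (innerSL ℝ).hasFDerivAt).fderiv]
    rfl
  set b := stdOrthonormalBasis ℝ E
  rw [InnerProductSpace.laplacian_eq_iteratedFDeriv_orthonormalBasis _ b]
  calc ∑ i, iteratedFDeriv ℝ 2 (fun y : E => h (‖y‖ ^ 2)) x ![b i, b i]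
      = ∑ i, (2 * h' (‖x‖ ^ 2) + 4 * h'' (‖x‖ ^ 2) * ⟪x, b i⟫ ^ 2) := by
        refine Finset.sum_congr rfl fun i _ => ?_
        rw [iteratedFDeriv_two_apply, hfirst]
        simp only [Matrix.cons_val_zero, Matrix.cons_val_one, hsecond, b.inner_eq_one]
        ring
    _ = _ := by
        rw [Finset.sum_add_distrib, ← Finset.mul_sum _ fun i => ⟪x, b i⟫ ^ 2, b.sum_sq_inner_left,
          Finset.sum_const, Finset.card_univ, Fintype.card_fin, nsmul_eq_mul]
        ring

end RadialLaplacian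

/-! ### Variational eigenvalues -/

section Isometry

variable {E : Type*} [NormedAddCommGroup E] [InnerProductSpace ℝ E]

theorem norm_fderiv_comp_linearIsometryEquiv (T : E ≃ₗᵢ[ℝ] E) (u : E → ℝ) (x : E) :
    ‖fderiv ℝ (u ∘ T) x‖ = ‖fderiv ℝ u (T x)‖ := by
  rw [← T.coe_toContinuousLinearEquiv, T.toContinuousLinearEquiv.comp_right_fderiv]
  exact ContinuousLinearMap.opNorm_comp_linearIsometryEquiv _ T

theorem contDiff_comp_linearIsometryEquiv_iff {n : WithTop ℕ∞} {T : E ≃ₗᵢ[ℝ] E} {u : E → ℝ} :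
    ContDiff ℝ n (u ∘ T) ↔ ContDiff ℝ n u :=
  T.toContinuousLinearEquiv.contDiff_comp_iff

variable [FiniteDimensional ℝ E] [MeasurableSpace E] [BorelSpace E]

theorem setIntegral_preimage_linearIsometryEquiv (T : E ≃ₗᵢ[ℝ] E) (f : E → ℝ) (s : Set E) :
    ∫ x in T ⁻¹' s, f (T x) = ∫ x in s, f x :=
  T.measurePreserving.setIntegral_preimage_emb T.toHomeomorph.measurableEmbedding f s

theorem integral_comp_linearIsometryEquiv (T : E ≃ₗᵢ[ℝ] E) (f : E → ℝ) :
    ∫ x, f (T x) = ∫ x, f x :=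
  T.measurePreserving.integral_comp T.toHomeomorph.measurableEmbedding f

end Isometry

section VariationalEigenvalues

variable {Ω : Set E2} {u : E2 → ℝ}

theorem integral_norm_fderiv_sq_div_nonneg (μ : Measure E2) (u : E2 → ℝ) :
    0 ≤ (∫ x, ‖fderiv ℝ u x‖ ^ 2 ∂μ) / ∫ x, u x ^ 2 ∂μ :=
  div_nonneg (integral_nonneg fun x => by positivity) (integral_nonneg fun x => sq_nonneg (u x))

theorem dEig1_nonneg (Ω : Set E2) : 0 ≤ dEig1 Ω :=
  Real.sInf_nonneg fun _ ⟨u, _, _, _, _, hR⟩ => hR ▸ integral_norm_fderiv_sq_div_nonneg _ u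

theorem nEig1_nonneg (Ω : Set E2) : 0 ≤ nEig1 Ω :=
  Real.sInf_nonneg fun _ ⟨u, _, _, _, hR⟩ => hR ▸ integral_norm_fderiv_sq_div_nonneg _ u

theorem dEig1_mul_integral_sq_le (hu : ContDiff ℝ (⊤ : ℕ∞) u) (hc : HasCompactSupport u)
    (hsub : tsupport u ⊆ Ω) : dEig1 Ω * ∫ x, u x ^ 2 ≤ ∫ x, ‖fderiv ℝ u x‖ ^ 2 := by
  rcases (integral_nonneg (f := fun x => u x ^ 2) fun x => sq_nonneg (u x)).eq_or_lt'
    with h0 | hpos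
  · rw [h0, mul_zero]
    exact integral_nonneg fun x => by positivity
  · rw [← le_div_iff₀ hpos]
    exact csInf_le ⟨0, fun _ ⟨u, _, _, _, _, hR⟩ => hR ▸ integral_norm_fderiv_sq_div_nonneg _ u⟩
      ⟨u, hu, hc, hsub, hpos.ne', rfl⟩

theorem nEig1_mul_integral_sq_le (hu : ContDiff ℝ (⊤ : ℕ∞) u) (hmean : ∫ x in Ω, u x = 0) :
    nEig1 Ω * ∫ x in Ω, u x ^ 2 ≤ ∫ x in Ω, ‖fderiv ℝ u x‖ ^ 2 := by
  rcases (integral_nonneg (f := fun x => u x ^ 2) fun x => sq_nonneg (u x)).eq_or_lt'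
    with h0 | hpos
  · rw [h0, mul_zero]
    exact integral_nonneg fun x => by positivity
  · rw [← le_div_iff₀ hpos]
    exact csInf_le ⟨0, fun _ ⟨u, _, _, _, hR⟩ => hR ▸ integral_norm_fderiv_sq_div_nonneg _ u⟩
      ⟨u, hu, hmean, hpos.ne', rfl⟩

theorem le_dEig1 {c : ℝ} (ho : IsOpen Ω) (hne : Ω.Nonempty)
    (hle : ∀ u : E2 → ℝ, ContDiff ℝ (⊤ : ℕ∞) u → HasCompactSupport u → tsupport u ⊆ Ω →
      c * ∫ x, u x ^ 2 ≤ ∫ x, ‖fderiv ℝ u x‖ ^ 2) : c ≤ dEig1 Ω := by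
  refine le_csInf ?_ fun R ⟨u, hu, hc, hsub, h0, hR⟩ => ?_
  · obtain ⟨z, hz⟩ := hne
    obtain ⟨f, hsub, hc, hf, -, hfz⟩ := exists_contDiff_tsupport_subset (n := ⊤) (ho.mem_nhds hz)
    refine ⟨_, f, hf, hc, hsub, ?_, rfl⟩
    have hcsq : HasCompactSupport fun x => f x ^ 2 :=
      hc.comp_left (g := fun t : ℝ => t ^ 2) (by simp)
    have hfc : Continuous fun x => f x ^ 2 := hf.continuous.pow 2
    exact (hfc.integral_pos_of_hasCompactSupport_nonneg_nonzero hcsq (fun x => sq_nonneg (f x))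
      (x := z) (by simp [hfz])).ne'
  · rw [hR, le_div_iff₀ ((integral_nonneg fun x => sq_nonneg (u x)).lt_of_ne' h0)]
    exact hle u hu hc hsub

theorem exists_coord_ne (ho : IsOpen Ω) (hne : Ω.Nonempty) (i : Fin 2) (c : ℝ) :
    ∃ z ∈ Ω, z i ≠ c := by
  by_contra! hconst
  have hopen : IsOpen ((fun z : E2 => z i) '' Ω) :=
    (EuclideanSpace.proj (𝕜 := ℝ) i).isOpenMap (fun t => ⟨EuclideanSpace.single i t, by simp⟩) Ω ho
  have hsub : (fun z : E2 => z i) '' Ω ⊆ {c} := image_subset_iff.2 hconst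
  have hempty := interior_maximal hsub hopen
  rw [interior_singleton, subset_empty_iff, image_eq_empty] at hempty
  exact hne.ne_empty hempty

theorem le_nEig1 {c : ℝ} (ho : IsOpen Ω) (hb : Bornology.IsBounded Ω) (hne : Ω.Nonempty)
    (hle : ∀ u : E2 → ℝ, ContDiff ℝ (⊤ : ℕ∞) u → ∫ x in Ω, u x = 0 →
      c * ∫ x in Ω, u x ^ 2 ≤ ∫ x in Ω, ‖fderiv ℝ u x‖ ^ 2) : c ≤ nEig1 Ω := by
  refine le_csInf ?_ fun R ⟨u, hu, hmean, h0, hR⟩ => ?_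
  · have : IsFiniteMeasure (volume.restrict Ω) :=
      isFiniteMeasure_restrict.2 hb.measure_lt_top.ne
    obtain ⟨z, hz, hzne⟩ := exists_coord_ne ho hne 0 (⨍ y in Ω, y 0)
    have hf : ContDiff ℝ (⊤ : ℕ∞) fun x : E2 => x 0 - ⨍ y in Ω, y 0 := by fun_prop
    refine ⟨_, _, hf, integral_sub_average _ _, ?_, rfl⟩
    exact (setIntegral_pos_of_continuous_of_isBounded (hf.continuous.pow 2)
      (fun x => sq_nonneg _) ho hb hz (pow_ne_zero 2 (sub_ne_zero.2 hzne))).ne'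
  · rw [hR, le_div_iff₀ ((integral_nonneg fun x => sq_nonneg (u x)).lt_of_ne' h0)]
    exact hle u hu hmean

theorem nEig1_mul_integral_sub_average_sq_le (hb : Bornology.IsBounded Ω)
    (hu : ContDiff ℝ (⊤ : ℕ∞) u) :
    nEig1 Ω * ∫ x in Ω, (u x - ⨍ y in Ω, u y) ^ 2 ≤ ∫ x in Ω, ‖fderiv ℝ u x‖ ^ 2 := by
  have : IsFiniteMeasure (volume.restrict Ω) :=
    isFiniteMeasure_restrict.2 hb.measure_lt_top.ne
  simpa only [fderiv_sub_const] using
    nEig1_mul_integral_sq_le (hu.sub contDiff_const) (integral_sub_average _ _)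

theorem dEig1_preimage_linearIsometryEquiv (T : E2 ≃ₗᵢ[ℝ] E2) (Ω : Set E2) :
    dEig1 (T ⁻¹' Ω) = dEig1 Ω := by
  unfold dEig1
  congr 1
  ext R
  refine ((T.symm.toEquiv.arrowCongr (Equiv.refl ℝ)).exists_congr fun u => ?_).symm
  change _ ↔ ContDiff ℝ (⊤ : ℕ∞) (u ∘ T) ∧ HasCompactSupport (u ∘ T.toHomeomorph) ∧
    tsupport (u ∘ T.toHomeomorph) ⊆ T ⁻¹' Ω ∧ ∫ x, u (T x) ^ 2 ≠ 0 ∧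
    R = (∫ x, ‖fderiv ℝ (u ∘ T) x‖ ^ 2) / ∫ x, u (T x) ^ 2
  simp_rw [norm_fderiv_comp_linearIsometryEquiv,
    integral_comp_linearIsometryEquiv T fun x => u x ^ 2,
    integral_comp_linearIsometryEquiv T fun x => ‖fderiv ℝ u x‖ ^ 2]
  rw [contDiff_comp_linearIsometryEquiv_iff, HasCompactSupport, HasCompactSupport,
    tsupport_comp_eq_preimage, T.toHomeomorph.isCompact_preimage]
  exact Iff.rfl.and (Iff.rfl.and
    ((T.toHomeomorph.surjective.preimage_subset_preimage_iff).symm.and Iff.rfl))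

theorem nEig1_preimage_linearIsometryEquiv (T : E2 ≃ₗᵢ[ℝ] E2) (Ω : Set E2) :
    nEig1 (T ⁻¹' Ω) = nEig1 Ω := by
  unfold nEig1
  congr 1
  ext R
  refine ((T.symm.toEquiv.arrowCongr (Equiv.refl ℝ)).exists_congr fun u => ?_).symm
  change _ ↔ ContDiff ℝ (⊤ : ℕ∞) (u ∘ T) ∧ ∫ x in T ⁻¹' Ω, u (T x) = 0 ∧
    ∫ x in T ⁻¹' Ω, u (T x) ^ 2 ≠ 0 ∧
    R = (∫ x in T ⁻¹' Ω, ‖fderiv ℝ (u ∘ T) x‖ ^ 2) / ∫ x in T ⁻¹' Ω, u (T x) ^ 2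
  simp_rw [norm_fderiv_comp_linearIsometryEquiv, setIntegral_preimage_linearIsometryEquiv T u,
    setIntegral_preimage_linearIsometryEquiv T fun x => u x ^ 2,
    setIntegral_preimage_linearIsometryEquiv T fun x => ‖fderiv ℝ u x‖ ^ 2]
  rw [contDiff_comp_linearIsometryEquiv_iff]

end VariationalEigenvalues

/-! ### The unit disc: Dirichlet eigenvalue -/

section DiscDirichlet

open scoped Laplacian

theorem laplacian_one_sub_norm_sq_mul_four_sub_norm_sq (x : E2) :
    Δ (fun y => (1 - ‖y‖ ^ 2) * (4 - ‖y‖ ^ 2) : E2 → ℝ) x = 16 * ‖x‖ ^ 2 - 20 := by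
  have hderiv (s : ℝ) : HasDerivAt (fun s : ℝ => (1 - s) * (4 - s)) (2 * s - 5) s :=
    ((((hasDerivAt_id s).const_sub 1).mul ((hasDerivAt_id s).const_sub 4)).congr_deriv
      (by simp only [id]; ring))
  have hderiv' (s : ℝ) : HasDerivAt (fun s : ℝ => 2 * s - 5) 2 s :=
    (((hasDerivAt_id s).const_mul 2).sub_const 5).congr_deriv (by ring)
  rw [laplacian_comp_norm_sq hderiv hderiv' x, finrank_euclideanSpace_fin]
  push_cast
  ring

theorem five_le_dEig1_unitDisc : 5 ≤ dEig1 unitDisc := by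
  refine le_dEig1 Metric.isOpen_ball (Metric.nonempty_ball.2 one_pos) fun u hu hc hsub => ?_
  have hnorm {x : E2} (hx : x ∈ unitDisc) : ‖x‖ ^ 2 < 1 := by
    rw [unitDisc, mem_ball_zero_iff] at hx
    exact (sq_lt_one_iff₀ (norm_nonneg x)).2 hx
  refine mul_integral_sq_le_integral_norm_fderiv_sq Metric.isOpen_ball
    (φ := fun x => (1 - ‖x‖ ^ 2) * (4 - ‖x‖ ^ 2)) ?_ (fun x hx => ?_) (fun x hx => ?_)
    (hu.of_le (by simp)) hc hsub
  · exact ((contDiff_const.sub (contDiff_norm_sq ℝ)).mul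
      (contDiff_const.sub (contDiff_norm_sq ℝ))).contDiffOn
  · exact mul_pos (by linarith [hnorm hx]) (by linarith [hnorm hx])
  · rw [laplacian_one_sub_norm_sq_mul_four_sub_norm_sq]
    nlinarith [hnorm hx, sq_nonneg ‖x‖]

end DiscDirichlet

/-! ### Poincaré inequalities in one variable and in polar coordinates -/

section OneVariablePoincare

variable {f f' : ℝ → ℝ} {a b : ℝ}

theorem sq_sub_le_mul_integral_deriv_sq (hf : ∀ x, HasDerivAt f (f' x) x) (hf' : Continuous f')
    (hab : a ≤ b) : (f b - f a) ^ 2 ≤ (b - a) * ∫ x in a..b, f' x ^ 2 := by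
  rcases hab.eq_or_lt with rfl | hlt
  · simp
  have : NeZero (volume.restrict (Ioc a b)) :=
    ⟨Measure.restrict_eq_zero.not.2 (by simpa using hlt)⟩
  have hL2 : MemLp f' 2 (volume.restrict (Ioc a b)) :=
    memLp_two_restrict_of_continuous_of_isBounded hf' (Metric.isBounded_Ioc a b)
  have hcs := measureReal_univ_mul_average_sq_le hL2
  rw [← intervalIntegral.integral_eq_sub_of_hasDerivAt (fun x _ => hf x)
    (hf'.intervalIntegrable a b), intervalIntegral.integral_of_le hab,
    intervalIntegral.integral_of_le hab, ← average_mul_measureReal_univ]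
  rw [measureReal_restrict_apply_univ, Real.volume_real_Ioc_of_le hab] at *
  nlinarith [mul_le_mul_of_nonneg_left hcs (sub_nonneg.2 hab)]

theorem integral_mul_sub_right_sq_le {w : ℝ → ℝ} (hf : ∀ x, HasDerivAt f (f' x) x)
    (hf' : Continuous f') (hw : Continuous w) (hw0 : ∀ x ∈ Icc a b, 0 ≤ w x)
    (hmono : MonotoneOn w (Icc a b)) (hab : a ≤ b) :
    ∫ x in a..b, w x * (f x - f b) ^ 2 ≤ (b - a) ^ 2 / 2 * ∫ x in a..b, w x * f' x ^ 2 := by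
  have hfc : Continuous f := continuous_iff_continuousAt.2 fun x => (hf x).continuousAt
  have hwf' : Continuous fun x => w x * f' x ^ 2 := by fun_prop
  set J := ∫ x in a..b, w x * f' x ^ 2
  have hpointwise : ∀ x ∈ Icc a b, w x * (f x - f b) ^ 2 ≤ (b - x) * J := fun x hx => calc
    w x * (f x - f b) ^ 2 = w x * (f b - f x) ^ 2 := by ring
    _ ≤ w x * ((b - x) * ∫ y in x..b, f' y ^ 2) := by
      gcongr
      exacts [hw0 x hx, sq_sub_le_mul_integral_deriv_sq hf hf' hx.2]
    _ = (b - x) * ∫ y in x..b, w x * f' y ^ 2 := by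
      rw [intervalIntegral.integral_const_mul]; ring
    _ ≤ (b - x) * ∫ y in x..b, w y * f' y ^ 2 := by
      gcongr
      · exact sub_nonneg.2 hx.2
      refine intervalIntegral.integral_mono_on hx.2
        (by apply Continuous.intervalIntegrable; fun_prop) (hwf'.intervalIntegrable _ _)
        fun y hy => ?_
      gcongr
      exact hmono hx ⟨hx.1.trans hy.1, hy.2⟩ hy.1
    _ ≤ (b - x) * J := by
      gcongr
      · exact sub_nonneg.2 hx.2
      refine intervalIntegral.integral_mono_interval hx.1 hx.2 le_rfl ?_
        (hwf'.intervalIntegrable _ _)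
      filter_upwards [ae_restrict_mem measurableSet_Ioc] with y hy
      exact mul_nonneg (hw0 y (Ioc_subset_Icc_self hy)) (sq_nonneg _)
  calc ∫ x in a..b, w x * (f x - f b) ^ 2
    _ ≤ ∫ x in a..b, (b - x) * J :=
      intervalIntegral.integral_mono_on hab (by apply Continuous.intervalIntegrable; fun_prop)
        (by apply Continuous.intervalIntegrable; fun_prop) hpointwise
    _ = (b - a) ^ 2 / 2 * J := by
      rw [intervalIntegral.integral_mul_const,
        intervalIntegral.integral_comp_sub_left (fun x => x) b, integral_id]
      ring

theorem integral_sub_right_sq_le (hf : ∀ x, HasDerivAt f (f' x) x) (hf' : Continuous f')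
    (hab : a ≤ b) :
    ∫ x in a..b, (f x - f b) ^ 2 ≤ (b - a) ^ 2 / 2 * ∫ x in a..b, f' x ^ 2 := by
  simpa only [one_mul] using integral_mul_sub_right_sq_le hf hf'
    (continuous_const (y := (1 : ℝ))) (fun _ _ => zero_le_one) monotoneOn_const hab

theorem integral_sub_left_sq_le (hf : ∀ x, HasDerivAt f (f' x) x) (hf' : Continuous f')
    (hab : a ≤ b) :
    ∫ x in a..b, (f x - f a) ^ 2 ≤ (b - a) ^ 2 / 2 * ∫ x in a..b, f' x ^ 2 := by
  have hreflect : ∀ x, HasDerivAt (fun x => f (-x)) (-f' (-x)) x := fun x =>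
    ((hf (-x)).comp x (hasDerivAt_neg x)).congr_deriv (mul_neg_one _)
  have h := integral_sub_right_sq_le hreflect (by fun_prop) (neg_le_neg hab)
  simp only [neg_sq, intervalIntegral.integral_comp_neg (fun x => f' x ^ 2),
    intervalIntegral.integral_comp_neg (fun x => (f x - f a) ^ 2), neg_neg] at h
  rwa [show -a - -b = b - a by ring] at h

theorem integral_sub_midpoint_sq_le (hf : ∀ x, HasDerivAt f (f' x) x) (hf' : Continuous f')
    (c : ℝ) {h : ℝ} (hh : 0 ≤ h) :
    ∫ x in (c - h)..(c + h), (f x - f c) ^ 2 ≤ h ^ 2 / 2 * ∫ x in (c - h)..(c + h), f' x ^ 2 := by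
  have hfc : Continuous f := continuous_iff_continuousAt.2 fun x => (hf x).continuousAt
  have hadd {g : ℝ → ℝ} (hg : Continuous g) : ∫ x in (c - h)..(c + h), g x =
      (∫ x in (c - h)..c, g x) + ∫ x in c..(c + h), g x :=
    (intervalIntegral.integral_add_adjacent_intervals (hg.intervalIntegrable _ _)
      (hg.intervalIntegrable _ _)).symm
  have hleft := integral_sub_right_sq_le hf hf' (a := c - h) (b := c) (by linarith)
  have hright := integral_sub_left_sq_le hf hf' (a := c) (b := c + h) (by linarith)
  rw [sub_sub_cancel] at hleft
  rw [add_sub_cancel_left] at hright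
  rw [hadd (by fun_prop : Continuous fun x => (f x - f c) ^ 2),
    hadd (by fun_prop : Continuous fun x => f' x ^ 2)]
  linarith

theorem integral_sub_const_sq_le_of_midpoints (hf : ∀ x, HasDerivAt f (f' x) x)
    (hf' : Continuous f') {h k : ℝ} (hh : 0 ≤ h) (n : ℕ)
    (hk : ∀ i < n, f (a + (2 * i + 1) * h) = k) :
    ∫ x in a..(a + 2 * n * h), (f x - k) ^ 2 ≤
      h ^ 2 / 2 * ∫ x in a..(a + 2 * n * h), f' x ^ 2 := by
  have hfc : Continuous f := continuous_iff_continuousAt.2 fun x => (hf x).continuousAt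
  have hsum {g : ℝ → ℝ} (hg : Continuous g) : ∫ x in a..(a + 2 * n * h), g x =
      ∑ i ∈ Finset.range n, ∫ x in (a + 2 * i * h)..(a + 2 * (i + 1 : ℕ) * h), g x := by
    rw [intervalIntegral.sum_integral_adjacent_intervals (a := fun i : ℕ => a + 2 * i * h)
      fun _ _ => hg.intervalIntegrable _ _]
    simp
  rw [hsum (by fun_prop : Continuous fun x => (f x - k) ^ 2),
    hsum (by fun_prop : Continuous fun x => f' x ^ 2), Finset.mul_sum]
  refine Finset.sum_le_sum fun i hi => ?_
  have hmid := integral_sub_midpoint_sq_le hf hf' (a + (2 * i + 1) * h) hh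
  rw [hk i (Finset.mem_range.1 hi)] at hmid
  rw [show a + (2 * i + 1) * h - h = a + 2 * i * h by ring,
    show a + (2 * i + 1) * h + h = a + 2 * (i + 1 : ℕ) * h by push_cast; ring] at hmid
  exact hmid

end OneVariablePoincare

section PolarPoincare

theorem integral_integral_swap_of_continuous {H : ℝ → ℝ → ℝ} (hH : Continuous (Function.uncurry H))
    (a b c d : ℝ) :
    ∫ x in a..b, ∫ y in c..d, H x y = ∫ y in c..d, ∫ x in a..b, H x y :=
  intervalIntegral_intervalIntegral_swap <| integrableOn_of_continuous_of_isBounded hH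
    ((Metric.isBounded_Ioc _ _).prod (Metric.isBounded_Ioc _ _))

theorem intervalIntegrable_integral_of_continuous {H : ℝ → ℝ → ℝ}
    (hH : Continuous (Function.uncurry H)) (a b c d : ℝ) :
    IntervalIntegrable (fun x => ∫ y in c..d, H x y) volume a b :=
  (intervalIntegral.continuous_parametric_intervalIntegral_of_continuous' hH c d).intervalIntegrable
    _ _

theorem integral_integral_add_of_continuous {H K : ℝ → ℝ → ℝ}
    (hH : Continuous (Function.uncurry H)) (hK : Continuous (Function.uncurry K)) {a b c d : ℝ} :
    ∫ x in a..b, ∫ y in c..d, (H x y + K x y) =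
      (∫ x in a..b, ∫ y in c..d, H x y) + ∫ x in a..b, ∫ y in c..d, K x y := by
  rw [← intervalIntegral.integral_add (intervalIntegrable_integral_of_continuous hH _ _ _ _)
    (intervalIntegrable_integral_of_continuous hK _ _ _ _)]
  congr! 2 with x
  exact intervalIntegral.integral_add ((hH.uncurry_left x).intervalIntegrable _ _)
    ((hK.uncurry_left x).intervalIntegrable _ _)

variable {F P Q : ℝ → ℝ → ℝ}

theorem integral_integral_mul_sub_boundary_sq_le (hF : Continuous (Function.uncurry F))
    (hP : Continuous (Function.uncurry P))
    (hFr : ∀ r θ, HasDerivAt (fun r => F r θ) (P r θ) r) {α β : ℝ} (hαβ : α ≤ β) :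
    ∫ r in (0 : ℝ)..1, ∫ θ in α..β, r * (F r θ - F 1 θ) ^ 2 ≤
      1 / 2 * ∫ r in (0 : ℝ)..1, ∫ θ in α..β, r * P r θ ^ 2 := by
  have hosc : Continuous (Function.uncurry fun r θ => r * (F r θ - F 1 θ) ^ 2) :=
    continuous_fst.mul ((hF.sub (hF.comp (continuous_const.prodMk continuous_snd))).pow 2)
  have hder : Continuous (Function.uncurry fun r θ => r * P r θ ^ 2) :=
    continuous_fst.mul (hP.pow 2)
  rw [integral_integral_swap_of_continuous hosc, integral_integral_swap_of_continuous hder,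
    ← intervalIntegral.integral_const_mul]
  refine intervalIntegral.integral_mono_on hαβ
    (intervalIntegrable_integral_of_continuous (H := fun θ r => r * (F r θ - F 1 θ) ^ 2)
      (hosc.comp continuous_swap) _ _ _ _)
    ((intervalIntegrable_integral_of_continuous (H := fun θ r => r * P r θ ^ 2)
      (hder.comp continuous_swap) _ _ _ _).const_mul _) fun θ _ => ?_
  simpa using integral_mul_sub_right_sq_le (fun r => hFr r θ) (hP.uncurry_right θ) continuous_id
    (fun _ hr => hr.1) (monotone_id.monotoneOn _) zero_le_one

theorem integral_sub_average_sq_le_of_quadrants {p p' q : ℝ → ℝ} {k : ℝ}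
    (hp : ∀ θ, HasDerivAt p (p' θ) θ) (hp' : Continuous p') (hq : Continuous q)
    (hk : ∀ i < 4, p (-π + (2 * i + 1 : ℕ) * (π / 4)) = k) :
    ∫ θ in (-π)..π, (p θ - ⨍ φ in Ioc (-π) π, q φ) ^ 2 ≤
      1 / 2 * (∫ θ in (-π)..π, p' θ ^ 2) + ∫ θ in (-π)..π, (p θ - q θ) ^ 2 := by
  have hpi : -π ≤ π := by linarith [pi_pos]
  have : NeZero (volume.restrict (Ioc (-π) π)) :=
    ⟨Measure.restrict_eq_zero.not.2 (by simp [pi_pos])⟩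
  have hpc : Continuous p := continuous_iff_continuousAt.2 fun x => (hp x).continuousAt
  have hL2 {g : ℝ → ℝ} (hg : Continuous g) : MemLp g 2 (volume.restrict (Ioc (-π) π)) :=
    memLp_two_restrict_of_continuous_of_isBounded hg (Metric.isBounded_Ioc _ _)
  have hsplit := integral_sub_average_sq_le_add (hL2 hpc) (hL2 hq) k
  simp only [← intervalIntegral.integral_of_le hpi] at hsplit
  have hquad := integral_sub_const_sq_le_of_midpoints hp hp' (h := π / 4) (by positivity) 4
    fun i hi => by simpa using hk i hi
  rw [show -π + 2 * (4 : ℕ) * (π / 4) = π by push_cast; ring] at hquad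
  have hconst : (π / 4) ^ 2 / 2 ≤ 1 / 2 := by nlinarith [pi_le_four, pi_pos]
  have hnonneg : 0 ≤ ∫ θ in (-π)..π, p' θ ^ 2 :=
    intervalIntegral.integral_nonneg hpi fun x _ => sq_nonneg _
  linarith [mul_le_mul_of_nonneg_right hconst hnonneg]

theorem two_mul_integral_integral_mul_sub_average_sq_le {k : ℝ → ℝ}
    (hF : Continuous (Function.uncurry F)) (hP : Continuous (Function.uncurry P))
    (hQ : Continuous (Function.uncurry Q)) (hFr : ∀ r θ, HasDerivAt (fun r => F r θ) (P r θ) r)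
    (hFθ : ∀ r θ, HasDerivAt (F r) (r * Q r θ) θ)
    (hk : ∀ r, ∀ i < 4, F r (-π + (2 * i + 1 : ℕ) * (π / 4)) = k r) :
    2 * ∫ r in (0 : ℝ)..1, ∫ θ in (-π)..π, r * (F r θ - ⨍ φ in Ioc (-π) π, F 1 φ) ^ 2 ≤
      (∫ r in (0 : ℝ)..1, ∫ θ in (-π)..π, r * P r θ ^ 2) +
        ∫ r in (0 : ℝ)..1, ∫ θ in (-π)..π, r * Q r θ ^ 2 := by
  set c := ⨍ φ in Ioc (-π) π, F 1 φ
  have hosc : Continuous (Function.uncurry fun r θ => r * (F r θ - F 1 θ) ^ 2) :=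
    continuous_fst.mul ((hF.sub (hF.comp (continuous_const.prodMk continuous_snd))).pow 2)
  have hdev : Continuous (Function.uncurry fun r θ => r * (F r θ - c) ^ 2) :=
    continuous_fst.mul ((hF.sub continuous_const).pow 2)
  have hder : Continuous (Function.uncurry fun r θ => r * Q r θ ^ 2) :=
    continuous_fst.mul (hQ.pow 2)
  have hangular : ∀ r ∈ Icc (0 : ℝ) 1, ∫ θ in (-π)..π, r * (F r θ - c) ^ 2 ≤
      1 / 2 * (∫ θ in (-π)..π, r * Q r θ ^ 2) + ∫ θ in (-π)..π, r * (F r θ - F 1 θ) ^ 2 := by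
    intro r hr
    have h := integral_sub_average_sq_le_of_quadrants (hFθ r)
      (continuous_const.mul (hQ.uncurry_left r)) (hF.uncurry_left 1) (hk r)
    have hQ0 : 0 ≤ ∫ θ in (-π)..π, Q r θ ^ 2 :=
      intervalIntegral.integral_nonneg (by linarith [pi_pos]) fun x _ => sq_nonneg _
    have hr2 : r ^ 2 ≤ 1 := pow_le_one₀ hr.1 hr.2
    simp only [mul_pow, intervalIntegral.integral_const_mul] at h ⊢
    nlinarith [mul_le_mul_of_nonneg_left h hr.1,
      mul_nonneg hr.1 (mul_nonneg (sub_nonneg.2 hr2) hQ0)]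
  have hmono := intervalIntegral.integral_mono_on zero_le_one
    (intervalIntegrable_integral_of_continuous hdev _ _ _ _)
    (((intervalIntegrable_integral_of_continuous hder _ _ _ _).const_mul _).add
      (intervalIntegrable_integral_of_continuous hosc _ _ _ _)) hangular
  rw [intervalIntegral.integral_add
    ((intervalIntegrable_integral_of_continuous hder _ _ _ _).const_mul _)
    (intervalIntegrable_integral_of_continuous hosc _ _ _ _),
    intervalIntegral.integral_const_mul] at hmono
  have hradial := integral_integral_mul_sub_boundary_sq_le hF hP hFr
    (by linarith [pi_pos] : -π ≤ π)
  linarith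

end PolarPoincare

/-! ### The unit disc: Neumann eigenvalue -/

section PlaneCoordinates

theorem volume_preserving_vec2 : MeasurePreserving fun p : ℝ × ℝ => (!₂[p.1, p.2] : E2) :=
  (PiLp.volume_preserving_toLp (Fin 2)).comp (volume_preserving_finTwoArrow ℝ).symm

theorem measurableEmbedding_vec2 : MeasurableEmbedding fun p : ℝ × ℝ => (!₂[p.1, p.2] : E2) :=
  (MeasurableEquiv.toLp 2 (Fin 2 → ℝ)).measurableEmbedding.comp
    MeasurableEquiv.finTwoArrow.symm.measurableEmbedding

theorem setIntegral_eq_setIntegral_vec2 (f : E2 → ℝ) (s : Set E2) :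
    ∫ x in s, f x = ∫ p in (fun p : ℝ × ℝ => (!₂[p.1, p.2] : E2)) ⁻¹' s, f !₂[p.1, p.2] :=
  (volume_preserving_vec2.setIntegral_preimage_emb measurableEmbedding_vec2 f s).symm

theorem integrableOn_comp_vec2_iff {f : E2 → ℝ} {s : Set E2} :
    IntegrableOn (fun p : ℝ × ℝ => f !₂[p.1, p.2])
      ((fun p : ℝ × ℝ => (!₂[p.1, p.2] : E2)) ⁻¹' s) ↔ IntegrableOn f s :=
  volume_preserving_vec2.integrableOn_comp_preimage measurableEmbedding_vec2

theorem hasDerivAt_vec2 {f g : ℝ → ℝ} {f' g' t : ℝ} (hf : HasDerivAt f f' t)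
    (hg : HasDerivAt g g' t) : HasDerivAt (fun t => (!₂[f t, g t] : E2)) !₂[f', g'] t := by
  have hpi : HasDerivAt (fun t => ![f t, g t]) ![f', g'] t :=
    hasDerivAt_pi.2 (Fin.forall_fin_two.2 ⟨hf, hg⟩)
  exact (PiLp.continuousLinearEquiv 2 ℝ fun _ : Fin 2 => ℝ).symm.hasFDerivAt.comp_hasDerivAt t hpi

theorem norm_sq_vec2 (x y : ℝ) : ‖(!₂[x, y] : E2)‖ ^ 2 = x ^ 2 + y ^ 2 := by
  simp [EuclideanSpace.real_norm_sq_eq]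

theorem norm_sq_eq_apply_sq_add_apply_sq (ℓ : E2 →L[ℝ] ℝ) {c s : ℝ} (h : c ^ 2 + s ^ 2 = 1) :
    ‖ℓ‖ ^ 2 = ℓ !₂[c, s] ^ 2 + ℓ !₂[-s, c] ^ 2 := by
  obtain ⟨v, rfl⟩ := (InnerProductSpace.toDual ℝ E2).surjective ℓ
  simp only [LinearIsometryEquiv.norm_map, InnerProductSpace.toDual_apply_apply,
    EuclideanSpace.real_norm_sq_eq, PiLp.inner_apply, Fin.sum_univ_two,
    Matrix.cons_val_zero, Matrix.cons_val_one, RCLike.inner_apply, conj_trivial]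
  linear_combination (-(v 0) ^ 2 - (v 1) ^ 2) * h

end PlaneCoordinates

section Slices

variable {α β : Type*} [MeasurableSpace α] [MeasurableSpace β] {μ : Measure α} {ν : Measure β}
  [SFinite μ] [SFinite ν]

theorem setIntegral_prod_mono_of_slices {s : Set (α × β)} (hs : MeasurableSet s)
    {f g : α × β → ℝ} (hf : IntegrableOn f s (μ.prod ν)) (hg : IntegrableOn g s (μ.prod ν))
    (hle : ∀ y, ∫ x in {x | (x, y) ∈ s}, f (x, y) ∂μ ≤ ∫ x in {x | (x, y) ∈ s}, g (x, y) ∂μ) :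
    ∫ p in s, f p ∂μ.prod ν ≤ ∫ p in s, g p ∂μ.prod ν := by
  have hslice (f : α × β → ℝ) (y : β) :
      ∫ x, s.indicator f (x, y) ∂μ = ∫ x in {x | (x, y) ∈ s}, f (x, y) ∂μ :=
    integral_indicator (f := fun x => f (x, y)) (measurable_prodMk_right hs)
  rw [← integrable_indicator_iff hs] at hf hg
  rw [← integral_indicator hs, ← integral_indicator hs, integral_prod_symm _ hf,
    integral_prod_symm _ hg]
  refine integral_mono hf.integral_prod_right hg.integral_prod_right fun y => ?_
  simpa only [hslice] using hle y

end Slices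

section SymmetricParts

variable {E : Type*} [NormedAddCommGroup E] [InnerProductSpace ℝ E] {u : E → ℝ} {T : E ≃ₗᵢ[ℝ] E}

/-- The part of `u` that is invariant under `T`, when `T` is an involution. -/
def symmPart (T : E ≃ₗᵢ[ℝ] E) (u : E → ℝ) (x : E) : ℝ := (1 / 2 : ℝ) * (u x + u (T x))

/-- The part of `u` that changes sign under `T`, when `T` is an involution. -/
def antisymmPart (T : E ≃ₗᵢ[ℝ] E) (u : E → ℝ) (x : E) : ℝ := (1 / 2 : ℝ) * (u x - u (T x))

theorem symmPart_apply_involutive (hT : Function.Involutive T) (u : E → ℝ) (x : E) :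
    symmPart T u (T x) = symmPart T u x := by
  rw [symmPart, symmPart, hT, add_comm]

theorem antisymmPart_apply_involutive (hT : Function.Involutive T) (u : E → ℝ) (x : E) :
    antisymmPart T u (T x) = -antisymmPart T u x := by
  rw [antisymmPart, antisymmPart, hT]
  ring

theorem contDiff_symmPart {n : WithTop ℕ∞} (T : E ≃ₗᵢ[ℝ] E) (hu : ContDiff ℝ n u) :
    ContDiff ℝ n (symmPart T u) :=
  contDiff_const.mul (hu.add (contDiff_comp_linearIsometryEquiv_iff.2 hu))

theorem contDiff_antisymmPart {n : WithTop ℕ∞} (T : E ≃ₗᵢ[ℝ] E) (hu : ContDiff ℝ n u) :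
    ContDiff ℝ n (antisymmPart T u) :=
  contDiff_const.mul (hu.sub (contDiff_comp_linearIsometryEquiv_iff.2 hu))

theorem norm_fderiv_symmPart_sq_add_norm_fderiv_antisymmPart_sq [CompleteSpace E]
    (hu : Differentiable ℝ u) (x : E) :
    ‖fderiv ℝ (symmPart T u) x‖ ^ 2 + ‖fderiv ℝ (antisymmPart T u) x‖ ^ 2 =
      1 / 2 * (‖fderiv ℝ u x‖ ^ 2 + ‖fderiv ℝ u (T x)‖ ^ 2) := by
  have huT : Differentiable ℝ (u ∘ T) := hu.comp T.toContinuousLinearEquiv.differentiable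
  have hsymm : fderiv ℝ (symmPart T u) x =
      (1 / 2 : ℝ) • (fderiv ℝ u x + fderiv ℝ (u ∘ T) x) :=
    (((hu x).hasFDerivAt.add (huT x).hasFDerivAt).const_smul (1 / 2 : ℝ)).fderiv
  have hanti : fderiv ℝ (antisymmPart T u) x =
      (1 / 2 : ℝ) • (fderiv ℝ u x - fderiv ℝ (u ∘ T) x) :=
    (((hu x).hasFDerivAt.sub (huT x).hasFDerivAt).const_smul (1 / 2 : ℝ)).fderiv
  have hpar := parallelogram_law_with_norm ℝ ((InnerProductSpace.toDual ℝ E).symm (fderiv ℝ u x))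
    ((InnerProductSpace.toDual ℝ E).symm (fderiv ℝ (u ∘ T) x))
  simp only [← map_add, ← map_sub, LinearIsometryEquiv.norm_map,
    norm_fderiv_comp_linearIsometryEquiv] at hpar
  rw [hsymm, hanti, norm_smul, norm_smul, Real.norm_of_nonneg (by norm_num)]
  linear_combination (1 / 4 : ℝ) * hpar

variable [FiniteDimensional ℝ E] [MeasurableSpace E] [BorelSpace E] {Ω : Set E}

theorem integral_symmPart (hTΩ : T ⁻¹' Ω = Ω) (hb : Bornology.IsBounded Ω) (hu : Continuous u) :
    ∫ x in Ω, symmPart T u x = ∫ x in Ω, u x := by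
  have hT := setIntegral_preimage_linearIsometryEquiv T u Ω
  rw [hTΩ] at hT
  simp only [symmPart]
  rw [integral_const_mul, integral_add (integrableOn_of_continuous_of_isBounded hu hb)
    (integrableOn_of_continuous_of_isBounded (by fun_prop) hb), hT]
  ring

theorem mul_integral_sq_le_of_symmPart_of_antisymmPart {c : ℝ} (hTΩ : T ⁻¹' Ω = Ω)
    (hb : Bornology.IsBounded Ω) (hu : ContDiff ℝ 1 u)
    (hsymm : c * ∫ x in Ω, symmPart T u x ^ 2 ≤ ∫ x in Ω, ‖fderiv ℝ (symmPart T u) x‖ ^ 2)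
    (hanti : c * ∫ x in Ω, antisymmPart T u x ^ 2 ≤
      ∫ x in Ω, ‖fderiv ℝ (antisymmPart T u) x‖ ^ 2) :
    c * ∫ x in Ω, u x ^ 2 ≤ ∫ x in Ω, ‖fderiv ℝ u x‖ ^ 2 := by
  have hint {f : E → ℝ} (hf : Continuous f) : IntegrableOn f Ω :=
    integrableOn_of_continuous_of_isBounded hf hb
  have hinv {f : E → ℝ} (hf : Continuous f) :
      ∫ x in Ω, 1 / 2 * (f x + f (T x)) = ∫ x in Ω, f x := integral_symmPart hTΩ hb hf
  have hs := contDiff_symmPart T hu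
  have ha := contDiff_antisymmPart T hu
  have hgrad {v : E → ℝ} (hv : ContDiff ℝ 1 v) : Continuous fun x => ‖fderiv ℝ v x‖ ^ 2 :=
    (hv.continuous_fderiv one_ne_zero).norm.pow 2
  have hsqc {v : E → ℝ} (hv : ContDiff ℝ 1 v) : Continuous fun x => v x ^ 2 :=
    hv.continuous.pow 2
  have hsq : ∫ x in Ω, symmPart T u x ^ 2 + antisymmPart T u x ^ 2 = ∫ x in Ω, u x ^ 2 := by
    rw [← hinv (hsqc hu)]
    congr! 2 with x
    simp only [symmPart, antisymmPart]
    ring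
  have henergy : ∫ x in Ω, ‖fderiv ℝ (symmPart T u) x‖ ^ 2 + ‖fderiv ℝ (antisymmPart T u) x‖ ^ 2 =
      ∫ x in Ω, ‖fderiv ℝ u x‖ ^ 2 := by
    rw [← hinv (hgrad hu)]
    simp only [norm_fderiv_symmPart_sq_add_norm_fderiv_antisymmPart_sq
      (hu.differentiable one_ne_zero)]
  rw [integral_add (hint (hsqc hs)) (hint (hsqc ha))] at hsq
  rw [integral_add (hint (hgrad hs)) (hint (hgrad ha))] at henergy
  rw [← hsq, ← henergy, mul_add]
  exact add_le_add hsymm hanti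

end SymmetricParts

section DiscNeumann

theorem isBounded_unitDisc : Bornology.IsBounded unitDisc := Metric.isBounded_ball

theorem measurableSet_unitDisc : MeasurableSet unitDisc := measurableSet_ball

theorem preimage_unitDisc_linearIsometryEquiv (T : E2 ≃ₗᵢ[ℝ] E2) :
    T ⁻¹' unitDisc = unitDisc := by
  ext x
  simp [unitDisc]

theorem integral_unitDisc_comp_linearIsometryEquiv (T : E2 ≃ₗᵢ[ℝ] E2) (f : E2 → ℝ) :
    ∫ x in unitDisc, f (T x) = ∫ x in unitDisc, f x := by
  simpa only [preimage_unitDisc_linearIsometryEquiv] using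
    setIntegral_preimage_linearIsometryEquiv T f unitDisc

theorem vec2_mem_unitDisc_iff {x y : ℝ} : (!₂[x, y] : E2) ∈ unitDisc ↔ x ^ 2 + y ^ 2 < 1 := by
  rw [unitDisc, mem_ball_zero_iff, ← norm_sq_vec2, sq_lt_one_iff₀ (norm_nonneg _)]

theorem horizontal_slice_unitDisc (y : ℝ) :
    {x : ℝ | (!₂[x, y] : E2) ∈ unitDisc} = Ioo (-√(1 - y ^ 2)) √(1 - y ^ 2) := by
  ext x
  rw [mem_ofPred_eq, vec2_mem_unitDisc_iff, mem_Ioo, ← abs_lt, Real.lt_sqrt (abs_nonneg x), sq_abs,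
    lt_sub_iff_add_lt]

/-- The reflection of the plane that changes the sign of the `i`-th coordinate. -/
def coordFlip (i : Fin 2) : E2 ≃ₗᵢ[ℝ] E2 :=
  LinearIsometryEquiv.piLpCongrRight 2 fun j =>
    if j = i then LinearIsometryEquiv.neg ℝ else LinearIsometryEquiv.refl ℝ ℝ

/-- The reflection of the plane that exchanges the two coordinates. -/
def coordSwap : E2 ≃ₗᵢ[ℝ] E2 := LinearIsometryEquiv.piLpCongrLeft 2 ℝ ℝ (Equiv.swap 0 1)

theorem coordFlip_zero_vec2 (x y : ℝ) : coordFlip 0 !₂[x, y] = !₂[-x, y] := by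
  ext i
  fin_cases i <;> simp [coordFlip]

theorem coordFlip_one_vec2 (x y : ℝ) : coordFlip 1 !₂[x, y] = !₂[x, -y] := by
  ext i
  fin_cases i <;> simp [coordFlip]

theorem coordFlip_involutive (i : Fin 2) : Function.Involutive (coordFlip i) := by
  intro x
  ext j
  by_cases hj : j = i <;> simp [coordFlip, hj]

theorem coordFlip_comm (x : E2) : coordFlip 0 (coordFlip 1 x) = coordFlip 1 (coordFlip 0 x) := by
  ext i
  fin_cases i <;> simp [coordFlip]

theorem coordSwap_coordFlip (x : E2) : coordSwap (coordFlip 0 x) = coordFlip 1 (coordSwap x) := by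
  ext i
  fin_cases i <;> simp [coordFlip, coordSwap]

theorem two_mul_integral_horizontal_sq_le {v : E2 → ℝ} (hv : ContDiff ℝ 1 v) {y l : ℝ}
    (hzero : v !₂[0, y] = 0) (hl : 0 ≤ l) (hl1 : l ≤ 1) :
    2 * ∫ x in (-l)..l, v !₂[x, y] ^ 2 ≤ ∫ x in (-l)..l, ‖fderiv ℝ v !₂[x, y]‖ ^ 2 := by
  have hgrad := hv.continuous_fderiv one_ne_zero
  have hderiv (x : ℝ) : HasDerivAt (fun x => v !₂[x, y]) (fderiv ℝ v !₂[x, y] !₂[1, 0]) x :=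
    (hv.differentiable one_ne_zero _).hasFDerivAt.comp_hasDerivAt x
      (hasDerivAt_vec2 (hasDerivAt_id' x) (hasDerivAt_const x y))
  have hslice := integral_sub_midpoint_sq_le hderiv (by fun_prop) 0 hl
  simp only [hzero, sub_zero, zero_sub, zero_add] at hslice
  have hdir : ∫ x in (-l)..l, fderiv ℝ v !₂[x, y] !₂[1, 0] ^ 2 ≤
      ∫ x in (-l)..l, ‖fderiv ℝ v !₂[x, y]‖ ^ 2 := by
    refine intervalIntegral.integral_mono_on (by linarith)
      (by apply Continuous.intervalIntegrable; fun_prop)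
      (((hgrad.comp (by fun_prop)).norm.pow 2).intervalIntegrable _ _) fun x _ => ?_
    rw [norm_sq_eq_apply_sq_add_apply_sq _ (by norm_num : (1 : ℝ) ^ 2 + 0 ^ 2 = 1)]
    exact le_add_of_nonneg_right (sq_nonneg _)
  have hnonneg : 0 ≤ ∫ x in (-l)..l, fderiv ℝ v !₂[x, y] !₂[1, 0] ^ 2 :=
    intervalIntegral.integral_nonneg (by linarith) fun x _ => sq_nonneg _
  nlinarith [mul_le_mul_of_nonneg_right (pow_le_one₀ hl hl1 : l ^ 2 ≤ 1) hnonneg]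

theorem two_mul_integral_unitDisc_sq_le_of_odd_zero {v : E2 → ℝ} (hv : ContDiff ℝ 1 v)
    (hodd : ∀ x, v (coordFlip 0 x) = -v x) :
    2 * ∫ x in unitDisc, v x ^ 2 ≤ ∫ x in unitDisc, ‖fderiv ℝ v x‖ ^ 2 := by
  have hint {f : E2 → ℝ} (hf : Continuous f) := integrableOn_comp_vec2_iff.2
    (integrableOn_of_continuous_of_isBounded (μ := volume) hf isBounded_unitDisc)
  have hsq : Continuous fun x => 2 * v x ^ 2 := continuous_const.mul (hv.continuous.pow 2)
  rw [← integral_const_mul, setIntegral_eq_setIntegral_vec2, setIntegral_eq_setIntegral_vec2]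
  refine setIntegral_prod_mono_of_slices
    (measurableEmbedding_vec2.measurable measurableSet_unitDisc) (hint hsq)
    (hint ((hv.continuous_fderiv one_ne_zero).norm.pow 2)) fun y => ?_
  have hzero : v !₂[0, y] = 0 := by
    have h := hodd !₂[0, y]
    rw [coordFlip_zero_vec2, neg_zero] at h
    linarith
  have hl : 0 ≤ √(1 - y ^ 2) := Real.sqrt_nonneg _
  simp only [mem_preimage, horizontal_slice_unitDisc, ← integral_Ioc_eq_integral_Ioo,
    ← intervalIntegral.integral_of_le (by linarith : -√(1 - y ^ 2) ≤ √(1 - y ^ 2)),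
    intervalIntegral.integral_const_mul]
  exact two_mul_integral_horizontal_sq_le hv hzero hl
    (Real.sqrt_le_one.2 (by linarith [sq_nonneg y]))

theorem two_mul_integral_unitDisc_sq_le_of_odd_one {v : E2 → ℝ} (hv : ContDiff ℝ 1 v)
    (hodd : ∀ x, v (coordFlip 1 x) = -v x) :
    2 * ∫ x in unitDisc, v x ^ 2 ≤ ∫ x in unitDisc, ‖fderiv ℝ v x‖ ^ 2 := by
  have h := two_mul_integral_unitDisc_sq_le_of_odd_zero (v := v ∘ coordSwap)
    (contDiff_comp_linearIsometryEquiv_iff.2 hv)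
    fun x => by simp only [Function.comp, coordSwap_coordFlip, hodd]
  simpa only [norm_fderiv_comp_linearIsometryEquiv, Function.comp,
    integral_unitDisc_comp_linearIsometryEquiv coordSwap fun x => v x ^ 2,
    integral_unitDisc_comp_linearIsometryEquiv coordSwap fun x => ‖fderiv ℝ v x‖ ^ 2] using h

theorem vec2_polar_mem_unitDisc_iff {r : ℝ} (hr : 0 ≤ r) (θ : ℝ) :
    (!₂[r * cos θ, r * sin θ] : E2) ∈ unitDisc ↔ r < 1 := by
  rw [vec2_mem_unitDisc_iff, ← sq_lt_one_iff₀ hr,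
    show (r * cos θ) ^ 2 + (r * sin θ) ^ 2 = r ^ 2 by
      linear_combination r ^ 2 * sin_sq_add_cos_sq θ]

theorem integral_unitDisc_eq_polar {G : E2 → ℝ} (hG : Continuous G) :
    ∫ x in unitDisc, G x =
      ∫ r in (0 : ℝ)..1, ∫ θ in (-π)..π, r * G !₂[r * cos θ, r * sin θ] := by
  have hpolar : ∀ p ∈ polarCoord.target,
      p.1 • ((fun p : ℝ × ℝ => (!₂[p.1, p.2] : E2)) ⁻¹' unitDisc).indicator
        (fun p => G !₂[p.1, p.2]) (polarCoord.symm p) = (Ioo (0 : ℝ) 1 ×ˢ Ioo (-π) π).indicator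
        (fun p => p.1 * G !₂[p.1 * cos p.2, p.1 * sin p.2]) p := by
    rintro ⟨r, θ⟩ ⟨hr, hθ⟩
    have hmem : polarCoord.symm (r, θ) ∈ (fun p : ℝ × ℝ => (!₂[p.1, p.2] : E2)) ⁻¹' unitDisc ↔
        r < 1 := vec2_polar_mem_unitDisc_iff (le_of_lt hr) θ
    by_cases hr1 : r < 1
    · rw [indicator_of_mem (hmem.2 hr1), indicator_of_mem
        (show (r, θ) ∈ Ioo (0 : ℝ) 1 ×ˢ Ioo (-π) π from ⟨⟨hr, hr1⟩, hθ⟩)]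
      rfl
    · rw [indicator_of_notMem (mt hmem.1 hr1), indicator_of_notMem fun h => hr1 h.1.2, smul_zero]
  have hsub : Ioo (0 : ℝ) 1 ×ˢ Ioo (-π) π ⊆ polarCoord.target :=
    prod_mono Ioo_subset_Ioi_self subset_rfl
  have hint : IntegrableOn (fun p : ℝ × ℝ => p.1 * G !₂[p.1 * cos p.2, p.1 * sin p.2])
      (Ioo (0 : ℝ) 1 ×ˢ Ioo (-π) π) (volume.prod volume) :=
    integrableOn_of_continuous_of_isBounded (by fun_prop)
      ((Metric.isBounded_Ioo _ _).prod (Metric.isBounded_Ioo _ _))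
  rw [setIntegral_eq_setIntegral_vec2,
    ← integral_indicator (measurableEmbedding_vec2.measurable measurableSet_unitDisc),
    ← integral_comp_polarCoord_symm,
    setIntegral_congr_fun polarCoord.open_target.measurableSet hpolar,
    setIntegral_indicator (measurableSet_Ioo.prod measurableSet_Ioo),
    inter_eq_self_of_subset_right hsub, Measure.volume_eq_prod, setIntegral_prod _ hint]
  simp only [intervalIntegral.integral_of_le zero_le_one,
    intervalIntegral.integral_of_le (by linarith [pi_pos] : -π ≤ π), integral_Ioc_eq_integral_Ioo]

theorem abs_cos_of_cos_two_mul_eq_zero {θ : ℝ} (h : cos (2 * θ) = 0) : |cos θ| = √(1 / 2) := by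
  rw [← Real.sqrt_sq_eq_abs, cos_sq, h, zero_div, add_zero]

theorem abs_sin_of_cos_two_mul_eq_zero {θ : ℝ} (h : cos (2 * θ) = 0) : |sin θ| = √(1 / 2) := by
  rw [← Real.sqrt_sq_eq_abs, sin_sq, cos_sq, h, zero_div, add_zero]
  norm_num

theorem apply_vec2_eq_apply_abs {q : E2 → ℝ} (h0 : ∀ x, q (coordFlip 0 x) = q x)
    (h1 : ∀ x, q (coordFlip 1 x) = q x) (x y : ℝ) : q !₂[x, y] = q !₂[|x|, |y|] := by
  have hx : q !₂[|x|, |y|] = q !₂[x, |y|] := by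
    rcases abs_choice x with h | h <;> rw [h]
    rw [← coordFlip_zero_vec2, h0]
  rw [hx]
  rcases abs_choice y with h | h <;> rw [h]
  rw [← coordFlip_one_vec2, h1]

theorem apply_polar_diagonal_eq {q : E2 → ℝ} (h0 : ∀ x, q (coordFlip 0 x) = q x)
    (h1 : ∀ x, q (coordFlip 1 x) = q x) (r : ℝ) (i : ℕ) :
    q !₂[r * cos (-π + (2 * i + 1 : ℕ) * (π / 4)), r * sin (-π + (2 * i + 1 : ℕ) * (π / 4))] =
      q !₂[|r| * √(1 / 2), |r| * √(1 / 2)] := by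
  have hcos : cos (2 * (-π + (2 * i + 1 : ℕ) * (π / 4))) = 0 := by
    rw [cos_eq_zero_iff]
    exact ⟨i - 2, by push_cast; ring⟩
  rw [apply_vec2_eq_apply_abs h0 h1, abs_mul, abs_mul, abs_cos_of_cos_two_mul_eq_zero hcos,
    abs_sin_of_cos_two_mul_eq_zero hcos]

theorem hasDerivAt_polar_radial {q : E2 → ℝ} (hq : Differentiable ℝ q) (r θ : ℝ) :
    HasDerivAt (fun r => q !₂[r * cos θ, r * sin θ])
      (fderiv ℝ q !₂[r * cos θ, r * sin θ] !₂[cos θ, sin θ]) r :=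
  (hq _).hasFDerivAt.comp_hasDerivAt r
    (hasDerivAt_vec2 (hasDerivAt_mul_const _) (hasDerivAt_mul_const _))

theorem hasDerivAt_polar_angular {q : E2 → ℝ} (hq : Differentiable ℝ q) (r θ : ℝ) :
    HasDerivAt (fun θ => q !₂[r * cos θ, r * sin θ])
      (r * fderiv ℝ q !₂[r * cos θ, r * sin θ] !₂[-sin θ, cos θ]) θ := by
  have hsmul : (!₂[r * -sin θ, r * cos θ] : E2) = r • !₂[-sin θ, cos θ] := by
    ext i
    fin_cases i <;> simp
  rw [← smul_eq_mul, ← map_smul, ← hsmul]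
  exact (hq _).hasFDerivAt.comp_hasDerivAt θ
    (hasDerivAt_vec2 ((hasDerivAt_cos θ).const_mul r) ((hasDerivAt_sin θ).const_mul r))

theorem exists_two_mul_integral_unitDisc_sub_sq_le_of_even {q : E2 → ℝ} (hq : ContDiff ℝ 1 q)
    (h0 : ∀ x, q (coordFlip 0 x) = q x) (h1 : ∀ x, q (coordFlip 1 x) = q x) :
    ∃ c, 2 * ∫ x in unitDisc, (q x - c) ^ 2 ≤ ∫ x in unitDisc, ‖fderiv ℝ q x‖ ^ 2 := by
  have hqc := hq.continuous
  have hgrad := hq.continuous_fderiv one_ne_zero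
  have hdiff := hq.differentiable one_ne_zero
  have hF : Continuous (Function.uncurry fun r θ => q !₂[r * cos θ, r * sin θ]) :=
    hqc.comp (by fun_prop)
  have hP : Continuous (Function.uncurry fun r θ =>
      fderiv ℝ q !₂[r * cos θ, r * sin θ] !₂[cos θ, sin θ]) :=
    (hgrad.comp (by fun_prop)).clm_apply (by fun_prop)
  have hQ : Continuous (Function.uncurry fun r θ =>
      fderiv ℝ q !₂[r * cos θ, r * sin θ] !₂[-sin θ, cos θ]) :=
    (hgrad.comp (by fun_prop)).clm_apply (by fun_prop)
  have hmulsq {H : ℝ → ℝ → ℝ} (hH : Continuous (Function.uncurry H)) :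
      Continuous (Function.uncurry fun r θ => r * H r θ ^ 2) := continuous_fst.mul (hH.pow 2)
  have hsplit (r θ : ℝ) := norm_sq_eq_apply_sq_add_apply_sq
    (fderiv ℝ q !₂[r * cos θ, r * sin θ]) (cos_sq_add_sin_sq θ)
  have hpoincare := two_mul_integral_integral_mul_sub_average_sq_le hF hP hQ
    (hasDerivAt_polar_radial hdiff) (hasDerivAt_polar_angular hdiff)
    fun r i _ => apply_polar_diagonal_eq h0 h1 r i
  set c := ⨍ φ in Ioc (-π) π, q !₂[1 * cos φ, 1 * sin φ]
  refine ⟨c, ?_⟩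
  rw [integral_unitDisc_eq_polar (G := fun x => (q x - c) ^ 2) (by fun_prop),
    integral_unitDisc_eq_polar (G := fun x => ‖fderiv ℝ q x‖ ^ 2) (by fun_prop)]
  simp only [hsplit, mul_add]
  rwa [integral_integral_add_of_continuous (hmulsq hP) (hmulsq hQ)]

theorem two_mul_integral_unitDisc_sq_le_of_even {q : E2 → ℝ} (hq : ContDiff ℝ 1 q)
    (h0 : ∀ x, q (coordFlip 0 x) = q x) (h1 : ∀ x, q (coordFlip 1 x) = q x)
    (hmean : ∫ x in unitDisc, q x = 0) :
    2 * ∫ x in unitDisc, q x ^ 2 ≤ ∫ x in unitDisc, ‖fderiv ℝ q x‖ ^ 2 := by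
  have : IsFiniteMeasure (volume.restrict unitDisc) :=
    isFiniteMeasure_restrict.2 isBounded_unitDisc.measure_lt_top.ne
  obtain ⟨c, hc⟩ := exists_two_mul_integral_unitDisc_sub_sq_le_of_even hq h0 h1
  have hsq := integral_sub_const_sq
    (memLp_two_restrict_of_continuous_of_isBounded (μ := volume) hq.continuous isBounded_unitDisc) c
  rw [hmean] at hsq
  nlinarith [mul_nonneg (measureReal_nonneg (μ := volume.restrict unitDisc) (s := univ))
    (sq_nonneg c)]

theorem two_le_nEig1_unitDisc : 2 ≤ nEig1 unitDisc := by
  refine le_nEig1 Metric.isOpen_ball isBounded_unitDisc ⟨0, by simp [unitDisc]⟩ fun u hu hmean => ?_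
  have hu1 : ContDiff ℝ 1 u := hu.of_le (by exact_mod_cast le_top)
  have hdisc (i : Fin 2) := preimage_unitDisc_linearIsometryEquiv (coordFlip i)
  have he := contDiff_symmPart (coordFlip 0) hu1
  refine mul_integral_sq_le_of_symmPart_of_antisymmPart (hdisc 0) isBounded_unitDisc hu1
    (mul_integral_sq_le_of_symmPart_of_antisymmPart (hdisc 1) isBounded_unitDisc he ?_ ?_)
    (two_mul_integral_unitDisc_sq_le_of_odd_zero (contDiff_antisymmPart _ hu1)
      (antisymmPart_apply_involutive (coordFlip_involutive 0) u))
  · refine two_mul_integral_unitDisc_sq_le_of_even (contDiff_symmPart _ he) (fun x => ?_)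
      (symmPart_apply_involutive (coordFlip_involutive 1) _) ?_
    · have heven := symmPart_apply_involutive (coordFlip_involutive 0) u
      rw [symmPart, heven, ← coordFlip_comm, heven, ← symmPart]
    · rw [integral_symmPart (hdisc 1) isBounded_unitDisc he.continuous,
        integral_symmPart (hdisc 0) isBounded_unitDisc hu1.continuous, hmean]
  · exact two_mul_integral_unitDisc_sq_le_of_odd_one (contDiff_antisymmPart _ he)
      (antisymmPart_apply_involutive (coordFlip_involutive 1) _)

end DiscNeumann

/-! ### Dirichlet eigenvalue: test functions vanishing on the boundary -/

section Truncation

/-- A smooth function of one variable that vanishes on `(-∞, 1]` and is the identity on `[2, ∞)`. -/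
def truncation (t : ℝ) : ℝ := t * smoothTransition (t - 1)

theorem contDiff_truncation : ContDiff ℝ (⊤ : ℕ∞) truncation :=
  contDiff_id.mul (smoothTransition.contDiff.comp (contDiff_id.sub contDiff_const))

theorem truncation_of_le_one {t : ℝ} (ht : t ≤ 1) : truncation t = 0 := by
  rw [truncation, smoothTransition.zero_of_nonpos (sub_nonpos.2 ht), mul_zero]

theorem truncation_of_two_le {t : ℝ} (ht : 2 ≤ t) : truncation t = t := by
  rw [truncation, smoothTransition.one_of_one_le (by linarith), mul_one]

theorem abs_truncation_le (t : ℝ) : |truncation t| ≤ |t| := by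
  rw [truncation, abs_mul, abs_of_nonneg (smoothTransition.nonneg _)]
  exact mul_le_of_le_one_right (abs_nonneg _) (smoothTransition.le_one _)

theorem deriv_truncation_of_lt_one {t : ℝ} (ht : t < 1) : deriv truncation t = 0 := by
  have hloc : truncation =ᶠ[nhds t] fun _ => 0 := by
    filter_upwards [Iio_mem_nhds ht] with s hs using truncation_of_le_one (le_of_lt hs)
  rw [hloc.deriv_eq, deriv_const]

theorem deriv_truncation_of_two_lt {t : ℝ} (ht : 2 < t) : deriv truncation t = 1 := by
  have hloc : truncation =ᶠ[nhds t] id := by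
    filter_upwards [Ioi_mem_nhds ht] with s hs using truncation_of_two_le (le_of_lt hs)
  rw [hloc.deriv_eq, deriv_id]

theorem continuous_deriv_truncation : Continuous (deriv truncation) :=
  contDiff_truncation.continuous_deriv (by simp)

theorem exists_abs_deriv_truncation_le : ∃ C, ∀ t, |deriv truncation t| ≤ C := by
  obtain ⟨C, hC⟩ := (isCompact_Icc (a := (1 : ℝ)) (b := 2)).exists_bound_of_continuousOn
    continuous_deriv_truncation.continuousOn
  refine ⟨max C 1, fun t => ?_⟩
  rcases lt_or_ge t 1 with h1 | h1
  · simp [deriv_truncation_of_lt_one h1]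
  rcases lt_or_ge 2 t with h2 | h2
  · simp [deriv_truncation_of_two_lt h2]
  · exact (hC t ⟨h1, h2⟩).trans (le_max_left _ _)

variable {X : Type*} {U : Set X} {w : X → ℝ} {c : ℝ}

/-- The function `w`, cut off smoothly where it is smaller than about `1 / c` and extended by zero
outside `U`. If `w` vanishes on the boundary of `U`, its support is a closed subset of `U`. -/
def truncateOn (U : Set X) (w : X → ℝ) (c : ℝ) : X → ℝ :=
  U.indicator fun x => c⁻¹ * truncation (c * w x)

theorem hasCompactSupport_truncateOn [PseudoMetricSpace X] [ProperSpace X]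
    (hU : Bornology.IsBounded U) : HasCompactSupport (truncateOn U w c) :=
  .of_support_subset_isCompact hU.isCompact_closure (support_indicator_subset.trans subset_closure)

variable [TopologicalSpace X]

theorem tsupport_truncateOn_subset_of_continuous (hw : Continuous w) :
    tsupport (truncateOn U w c) ⊆ closure U ∩ {x | 1 ≤ c * w x} := by
  refine closure_minimal (fun x hx => ?_)
    (isClosed_closure.inter (isClosed_le continuous_const (by fun_prop)))
  have hxU : x ∈ U := mem_of_indicator_ne_zero hx
  refine ⟨subset_closure hxU, le_of_not_gt fun hlt : c * w x < 1 => hx ?_⟩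
  rw [truncateOn, indicator_of_mem hxU, truncation_of_le_one hlt.le, mul_zero]

theorem tsupport_truncateOn_subset (hw : Continuous w) (hU : IsOpen U)
    (hfr : ∀ x ∈ frontier U, w x = 0) : tsupport (truncateOn U w c) ⊆ U := by
  intro x hx
  obtain ⟨hcl, hwx⟩ := tsupport_truncateOn_subset_of_continuous hw hx
  by_contra hxU
  have hzero := hfr x ⟨hcl, by rwa [hU.interior_eq]⟩
  simp only [mem_ofPred_eq, hzero, mul_zero] at hwx
  linarith

theorem truncateOn_eventuallyEq (hU : IsOpen U) {x : X} (hx : x ∈ U) :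
    truncateOn U w c =ᶠ[nhds x] fun x => c⁻¹ * truncation (c * w x) := by
  filter_upwards [hU.mem_nhds hx] with y hy using indicator_of_mem hy _

end Truncation

section SmoothTruncation

variable {E : Type*} [NormedAddCommGroup E] [NormedSpace ℝ E] {U : Set E} {w : E → ℝ} {c : ℝ}

theorem contDiff_truncateOn (hw : ContDiff ℝ (⊤ : ℕ∞) w) (hU : IsOpen U)
    (hfr : ∀ x ∈ frontier U, w x = 0) : ContDiff ℝ (⊤ : ℕ∞) (truncateOn U w c) := by
  refine contMDiff_iff_contDiff.1 (contMDiff_of_tsupport fun x hx =>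
    contMDiffAt_iff_contDiffAt.2 (ContDiffAt.congr_of_eventuallyEq ?_
      (truncateOn_eventuallyEq hU (tsupport_truncateOn_subset hw.continuous hU hfr hx))))
  exact (contDiff_const.mul (contDiff_truncation.comp (contDiff_const.mul hw))).contDiffAt

theorem fderiv_truncateOn (hw : Differentiable ℝ w) (hU : IsOpen U) (hc : c ≠ 0) {x : E}
    (hx : x ∈ U) :
    fderiv ℝ (truncateOn U w c) x = deriv truncation (c * w x) • fderiv ℝ w x := by
  have htr := (contDiff_truncation.differentiable (by simp) (c * w x)).hasDerivAt
  have h : HasFDerivAt (fun x => c⁻¹ * truncation (c * w x))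
      (c⁻¹ • deriv truncation (c * w x) • c • fderiv ℝ w x) x :=
    (HasDerivAt.comp_hasFDerivAt (h₂ := truncation) x htr
      ((hw x).hasFDerivAt.const_mul c)).const_mul c⁻¹
  rw [(truncateOn_eventuallyEq hU hx).fderiv_eq, h.fderiv, smul_comm _ c, inv_smul_smul₀ hc]

end SmoothTruncation

section TruncationLimit

variable {E : Type*} [NormedAddCommGroup E] [NormedSpace ℝ E] [FiniteDimensional ℝ E]
  [MeasurableSpace E] [BorelSpace E] {μ : Measure E} [IsFiniteMeasureOnCompacts μ]
  {U : Set E} {w : E → ℝ}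

theorem tendsto_integral_truncateOn_sq (hw : Continuous w) (hU : IsOpen U)
    (hb : Bornology.IsBounded U) (hpos : ∀ x ∈ U, 0 < w x) :
    Tendsto (fun c => ∫ x, truncateOn U w c x ^ 2 ∂μ) atTop (nhds (∫ x in U, w x ^ 2 ∂μ)) := by
  have hset (c : ℝ) : ∫ x, truncateOn U w c x ^ 2 ∂μ =
      ∫ x in U, (c⁻¹ * truncation (c * w x)) ^ 2 ∂μ := by
    rw [← integral_indicator hU.measurableSet]
    congr! 2 with x
    by_cases hx : x ∈ U <;> simp [truncateOn, hx]
  simp only [hset]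
  have htr := contDiff_truncation.continuous
  refine tendsto_integral_filter_of_dominated_convergence (fun x => w x ^ 2)
    (.of_forall fun c => (by fun_prop : Continuous _).aestronglyMeasurable) ?_
    (integrableOn_of_continuous_of_isBounded (by fun_prop) hb)
    (ae_restrict_of_forall_mem hU.measurableSet fun x hx => ?_)
  · filter_upwards [eventually_gt_atTop 0] with c hc
    refine .of_forall fun x => ?_
    rw [Real.norm_of_nonneg (sq_nonneg _), sq_le_sq, abs_mul, abs_inv, abs_of_pos hc,
      inv_mul_le_iff₀ hc]
    simpa [abs_mul, abs_of_pos hc] using abs_truncation_le (c * w x)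
  · refine tendsto_const_nhds.congr' ?_
    filter_upwards [eventually_gt_atTop 0, eventually_ge_atTop (2 / w x)] with c hc h2
    rw [truncation_of_two_le ((div_le_iff₀ (hpos x hx)).1 h2), inv_mul_cancel_left₀ hc.ne']

theorem tendsto_integral_norm_fderiv_truncateOn_sq (hw : ContDiff ℝ 1 w) (hU : IsOpen U)
    (hb : Bornology.IsBounded U) (hpos : ∀ x ∈ U, 0 < w x) (hfr : ∀ x ∈ frontier U, w x = 0) :
    Tendsto (fun c => ∫ x, ‖fderiv ℝ (truncateOn U w c) x‖ ^ 2 ∂μ) atTop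
      (nhds (∫ x in U, ‖fderiv ℝ w x‖ ^ 2 ∂μ)) := by
  have hgrad := hw.continuous_fderiv one_ne_zero
  have hwc := hw.continuous
  have htr := continuous_deriv_truncation
  have hset : ∀ᶠ c in atTop, ∫ x in U, (|deriv truncation (c * w x)| * ‖fderiv ℝ w x‖) ^ 2 ∂μ =
      ∫ x, ‖fderiv ℝ (truncateOn U w c) x‖ ^ 2 ∂μ := by
    filter_upwards [eventually_gt_atTop 0] with c hc
    rw [← setIntegral_eq_integral_of_forall_compl_eq_zero (s := U)
      (f := fun x => ‖fderiv ℝ (truncateOn U w c) x‖ ^ 2)]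
    · refine setIntegral_congr_fun hU.measurableSet fun x hx => ?_
      simp only [fderiv_truncateOn (hw.differentiable one_ne_zero) hU hc.ne' hx, norm_smul,
        Real.norm_eq_abs]
    · intro x hx
      rw [fderiv_of_notMem_tsupport ℝ fun h => hx (tsupport_truncateOn_subset hwc hU hfr h)]
      simp
  obtain ⟨C, hC⟩ := exists_abs_deriv_truncation_le
  refine Tendsto.congr' hset (tendsto_integral_filter_of_dominated_convergence
    (fun x => (C * ‖fderiv ℝ w x‖) ^ 2)
    (.of_forall fun c => (by fun_prop : Continuous _).aestronglyMeasurable)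
    (.of_forall fun c => .of_forall fun x => ?_)
    (integrableOn_of_continuous_of_isBounded ((continuous_const.mul hgrad.norm).pow 2) hb)
    (ae_restrict_of_forall_mem hU.measurableSet fun x hx => tendsto_const_nhds.congr' ?_))
  · rw [Real.norm_of_nonneg (sq_nonneg _)]
    gcongr
    exact hC _
  · filter_upwards [eventually_gt_atTop (2 / w x)] with c h2
    rw [deriv_truncation_of_two_lt ((div_lt_iff₀ (hpos x hx)).1 h2), abs_one, one_mul]

end TruncationLimit

section DirichletUpperBound

variable {Ω U : Set E2} {w : E2 → ℝ}

theorem dEig1_mul_setIntegral_sq_le (hUΩ : U ⊆ Ω) (hw : ContDiff ℝ (⊤ : ℕ∞) w) (hU : IsOpen U)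
    (hb : Bornology.IsBounded U) (hpos : ∀ x ∈ U, 0 < w x) (hfr : ∀ x ∈ frontier U, w x = 0) :
    dEig1 Ω * ∫ x in U, w x ^ 2 ≤ ∫ x in U, ‖fderiv ℝ w x‖ ^ 2 :=
  le_of_tendsto_of_tendsto'
    ((tendsto_integral_truncateOn_sq hw.continuous hU hb hpos).const_mul _)
    (tendsto_integral_norm_fderiv_truncateOn_sq (hw.of_le (by exact_mod_cast le_top)) hU hb hpos
      hfr)
    fun _ => dEig1_mul_integral_sq_le (contDiff_truncateOn hw hU hfr)
      (hasCompactSupport_truncateOn hb)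
      ((tsupport_truncateOn_subset hw.continuous hU hfr).trans hUΩ)

end DirichletUpperBound

section Cross

/-- The signed area of the parallelogram spanned by `a` and `b`. -/
def cross (a b : E2) : ℝ := a 0 * b 1 - a 1 * b 0

/-- The affine coordinates of the plane with respect to a basis `a`, `b`, by Cramer's rule. -/
def crossCoords (a b : E2) (h : cross a b ≠ 0) : E2 ≃L[ℝ] ℝ × ℝ :=
  LinearEquiv.toContinuousLinearEquiv
    { toFun := fun z => (cross z b / cross a b, cross a z / cross a b)
      invFun := fun q => q.1 • a + q.2 • b
      map_add' := fun z z' => by ext <;> simp [cross] <;> ring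
      map_smul' := fun r z => by ext <;> simp [cross] <;> ring
      left_inv := fun z => by
        ext i
        fin_cases i <;> simp only [Fin.zero_eta, Fin.mk_one, PiLp.add_apply, PiLp.smul_apply,
          smul_eq_mul] <;> field_simp <;> simp [cross] <;> ring
      right_inv := fun q => by
        ext <;> field_simp <;> simp [cross] <;> ring }

theorem crossCoords_symm_apply {a b : E2} (h : cross a b ≠ 0) (q : ℝ × ℝ) :
    (crossCoords a b h).symm q = q.1 • a + q.2 • b := rfl

theorem norm_sq_fst_crossCoords {a b : E2} (h : cross a b ≠ 0) :
    ‖(ContinuousLinearMap.fst ℝ ℝ ℝ).comp (crossCoords a b h : E2 →L[ℝ] ℝ × ℝ)‖ ^ 2 =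
      ‖b‖ ^ 2 / cross a b ^ 2 := by
  rw [norm_sq_eq_apply_sq_add_apply_sq _ (by norm_num : (1 : ℝ) ^ 2 + 0 ^ 2 = 1)]
  change (cross !₂[1, 0] b / cross a b) ^ 2 + (cross !₂[-0, 1] b / cross a b) ^ 2 = _
  rw [EuclideanSpace.real_norm_sq_eq, Fin.sum_univ_two, div_pow, div_pow, ← add_div]
  simp [cross, add_comm]

theorem norm_sq_snd_crossCoords {a b : E2} (h : cross a b ≠ 0) :
    ‖(ContinuousLinearMap.snd ℝ ℝ ℝ).comp (crossCoords a b h : E2 →L[ℝ] ℝ × ℝ)‖ ^ 2 =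
      ‖a‖ ^ 2 / cross a b ^ 2 := by
  rw [norm_sq_eq_apply_sq_add_apply_sq _ (by norm_num : (1 : ℝ) ^ 2 + 0 ^ 2 = 1)]
  change (cross a !₂[1, 0] / cross a b) ^ 2 + (cross a !₂[-0, 1] / cross a b) ^ 2 = _
  rw [EuclideanSpace.real_norm_sq_eq, Fin.sum_univ_two, div_pow, div_pow, ← add_div]
  simp [cross, add_comm]

end Cross

section SineProduct

theorem exists_setIntegral_comp_sub_eq_mul {E F : Type*} [NormedAddCommGroup E] [NormedSpace ℝ E]
    [MeasurableSpace E] [BorelSpace E] [NormedAddCommGroup F] [NormedSpace ℝ F]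
    [FiniteDimensional ℝ F] [MeasurableSpace F] [BorelSpace F]
    (μ : Measure E) [μ.IsAddHaarMeasure] (ν : Measure F) [ν.IsAddHaarMeasure]
    (L : E ≃L[ℝ] F) (p : E) :
    ∃ c > 0, ∀ (G : F → ℝ) (s : Set F),
      ∫ z in (fun z => L (z - p)) ⁻¹' s, G (L (z - p)) ∂μ = c * ∫ q in s, G q ∂ν := by
  have hmap : μ.map L = (Measure.addHaarScalarFactor (μ.map L) ν) • ν :=
    Measure.isAddLeftInvariant_eq_smul _ _
  refine ⟨_, NNReal.coe_pos.2 (Measure.addHaarScalarFactor_pos_of_isAddHaarMeasure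
    (μ.map L) ν), fun G s => ?_⟩
  have hL : MeasurableEmbedding L := L.toHomeomorph.measurableEmbedding
  have htrans := (measurePreserving_sub_right μ p).setIntegral_preimage_emb
    (Homeomorph.subRight p).measurableEmbedding (fun z => G (L z)) (L ⁻¹' s)
  rw [← smul_eq_mul, ← NNReal.smul_def, ← integral_smul_nnreal_measure, ← Measure.restrict_smul,
    ← hmap, hL.setIntegral_map]
  exact htrans

theorem norm_smul_add_smul_dual_sq {E : Type*} [NormedAddCommGroup E] [InnerProductSpace ℝ E]
    [CompleteSpace E] (ℓ₁ ℓ₂ : E →L[ℝ] ℝ) (α β : ℝ) :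
    ‖α • ℓ₁ + β • ℓ₂‖ ^ 2 = α ^ 2 * ‖ℓ₁‖ ^ 2 +
      2 * ⟪(InnerProductSpace.toDual ℝ E).symm ℓ₁, (InnerProductSpace.toDual ℝ E).symm ℓ₂⟫ *
        (α * β) + β ^ 2 * ‖ℓ₂‖ ^ 2 := by
  obtain ⟨v, rfl⟩ := (InnerProductSpace.toDual ℝ E).surjective ℓ₁
  obtain ⟨w, rfl⟩ := (InnerProductSpace.toDual ℝ E).surjective ℓ₂
  have hmap : α • InnerProductSpace.toDual ℝ E v + β • InnerProductSpace.toDual ℝ E w =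
      InnerProductSpace.toDual ℝ E (α • v + β • w) := by simp
  rw [hmap]
  simp only [LinearIsometryEquiv.norm_map, LinearIsometryEquiv.symm_apply_apply, norm_add_sq_real,
    norm_smul, inner_smul_left, inner_smul_right, mul_pow, Real.norm_eq_abs, sq_abs,
    conj_trivial]
  ring

theorem integral_cos_pi_mul : ∫ t in Ioo (0 : ℝ) 1, cos (π * t) = 0 := by
  rw [← integral_Ioc_eq_integral_Ioo, ← intervalIntegral.integral_of_le zero_le_one,
    intervalIntegral.integral_comp_mul_left cos pi_ne_zero, integral_cos]
  simp

theorem integral_sin_pi_mul_sq : ∫ t in Ioo (0 : ℝ) 1, sin (π * t) ^ 2 = 1 / 2 := by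
  rw [← integral_Ioc_eq_integral_Ioo, ← intervalIntegral.integral_of_le zero_le_one,
    intervalIntegral.integral_comp_mul_left (fun t => sin t ^ 2) pi_ne_zero, integral_sin_sq]
  simp only [mul_zero, sin_zero, mul_one, sin_pi, cos_pi, mul_neg, neg_zero, sub_self, zero_add,
    sub_zero, smul_eq_mul, zero_mul]
  field_simp

theorem integral_cos_pi_mul_sq : ∫ t in Ioo (0 : ℝ) 1, cos (π * t) ^ 2 = 1 / 2 := by
  rw [← integral_Ioc_eq_integral_Ioo, ← intervalIntegral.integral_of_le zero_le_one,
    intervalIntegral.integral_comp_mul_left (fun t => cos t ^ 2) pi_ne_zero, integral_cos_sq]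
  simp only [mul_one, sin_pi, mul_zero, sin_zero, sub_self, zero_add, sub_zero, smul_eq_mul]
  field_simp

theorem integral_sin_pi_mul_mul_cos_pi_mul :
    ∫ t in Ioo (0 : ℝ) 1, sin (π * t) * cos (π * t) = 0 := by
  rw [← integral_Ioc_eq_integral_Ioo, ← intervalIntegral.integral_of_le zero_le_one,
    intervalIntegral.integral_comp_mul_left (fun t => sin t * cos t) pi_ne_zero,
    integral_sin_mul_cos₁]
  simp

/-- In the coordinates `q = L (z - p)`, the first Dirichlet eigenfunction `sin (π q₁) sin (π q₂)` of
the unit square. -/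
def sineProduct (L : E2 ≃L[ℝ] ℝ × ℝ) (p z : E2) : ℝ :=
  sin (π * (L (z - p)).1) * sin (π * (L (z - p)).2)

/-- The open parallelogram with corner `p` whose affine coordinates `L (z - p)` range over the unit
square. -/
def openParallelogram (L : E2 ≃L[ℝ] ℝ × ℝ) (p : E2) : Set E2 :=
  (fun z => L (z - p)) ⁻¹' Ioo (0 : ℝ) 1 ×ˢ Ioo (0 : ℝ) 1

variable (L : E2 ≃L[ℝ] ℝ × ℝ) (p : E2)

theorem contDiff_sineProduct : ContDiff ℝ (⊤ : ℕ∞) (sineProduct L p) := by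
  unfold sineProduct
  fun_prop

theorem isOpen_openParallelogram : IsOpen (openParallelogram L p) :=
  (isOpen_Ioo.prod isOpen_Ioo).preimage (by fun_prop)

theorem isBounded_openParallelogram : Bornology.IsBounded (openParallelogram L p) := by
  have himage : openParallelogram L p =
      (fun q => L.symm q + p) '' Ioo (0 : ℝ) 1 ×ˢ Ioo (0 : ℝ) 1 :=
    (Equiv.image_symm_eq_preimage ((Homeomorph.subRight p).trans L.toHomeomorph).toEquiv _).symm
  rw [himage]
  refine ((isCompact_Icc.prod isCompact_Icc).image (by fun_prop)).isBounded.subset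
    (image_mono (prod_mono Ioo_subset_Icc_self Ioo_subset_Icc_self))

theorem sineProduct_pos {z : E2} (hz : z ∈ openParallelogram L p) : 0 < sineProduct L p z := by
  have hsin {t : ℝ} (ht : t ∈ Ioo (0 : ℝ) 1) : 0 < sin (π * t) :=
    sin_pos_of_pos_of_lt_pi (mul_pos pi_pos ht.1) (by nlinarith [ht.2, pi_pos])
  exact mul_pos (hsin hz.1) (hsin hz.2)

theorem sineProduct_eq_zero_of_mem_frontier {z : E2} (hz : z ∈ frontier (openParallelogram L p)) :
    sineProduct L p z = 0 := by
  have hsin {t : ℝ} (ht : t ∈ frontier (Ioo (0 : ℝ) 1)) : sin (π * t) = 0 := by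
    rw [frontier_Ioo zero_lt_one] at ht
    rcases ht with rfl | rfl <;> simp
  have hfr : L (z - p) ∈ frontier (Ioo (0 : ℝ) 1 ×ˢ Ioo (0 : ℝ) 1) :=
    (((Homeomorph.subRight p).trans L.toHomeomorph).preimage_frontier _).symm.subset hz
  rw [frontier_prod_eq] at hfr
  rcases hfr with ⟨-, h⟩ | ⟨h, -⟩ <;> rw [sineProduct, hsin h] <;> ring

theorem fderiv_sineProduct (z : E2) :
    fderiv ℝ (sineProduct L p) z =
      (π * (cos (π * (L (z - p)).1) * sin (π * (L (z - p)).2))) •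
          (ContinuousLinearMap.fst ℝ ℝ ℝ).comp (L : E2 →L[ℝ] ℝ × ℝ) +
        (π * (sin (π * (L (z - p)).1) * cos (π * (L (z - p)).2))) •
          (ContinuousLinearMap.snd ℝ ℝ ℝ).comp (L : E2 →L[ℝ] ℝ × ℝ) := by
  have hL : HasFDerivAt (fun z => L (z - p)) (L : E2 →L[ℝ] ℝ × ℝ) z :=
    L.hasFDerivAt.comp z ((hasFDerivAt_id z).sub_const p)
  have h : HasFDerivAt (sineProduct L p) _ z :=
    ((hL.fst.const_mul π).sin).mul ((hL.snd.const_mul π).sin)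
  rw [h.fderiv]
  module

theorem integral_unitSquare_gradient_sq (A B C : ℝ) :
    ∫ q in Ioo (0 : ℝ) 1 ×ˢ Ioo (0 : ℝ) 1,
      ((π * (cos (π * q.1) * sin (π * q.2))) ^ 2 * A +
        B * (π * (cos (π * q.1) * sin (π * q.2)) * (π * (sin (π * q.1) * cos (π * q.2)))) +
        (π * (sin (π * q.1) * cos (π * q.2))) ^ 2 * C) = π ^ 2 * (A + C) / 4 := by
  set S : Set (ℝ × ℝ) := Ioo (0 : ℝ) 1 ×ˢ Ioo (0 : ℝ) 1
  have hint {f : ℝ × ℝ → ℝ} (hf : Continuous f) : IntegrableOn f S :=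
    integrableOn_of_continuous_of_isBounded hf
      ((Metric.isBounded_Ioo 0 1).prod (Metric.isBounded_Ioo 0 1))
  have hprod (f g : ℝ → ℝ) : ∫ q in S, f q.1 * g q.2 =
      (∫ t in Ioo (0 : ℝ) 1, f t) * ∫ t in Ioo (0 : ℝ) 1, g t := by
    rw [Measure.volume_eq_prod, setIntegral_prod_mul]
  calc
    _ = ∫ q in S, (π ^ 2 * A * (cos (π * q.1) ^ 2 * sin (π * q.2) ^ 2) +
          π ^ 2 * B * ((sin (π * q.1) * cos (π * q.1)) * (sin (π * q.2) * cos (π * q.2))) +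
          π ^ 2 * C * (sin (π * q.1) ^ 2 * cos (π * q.2) ^ 2)) := by
      congr with q
      ring
    _ = _ := by
      rw [integral_add (hint (by fun_prop)) (hint (by fun_prop)),
        integral_add (hint (by fun_prop)) (hint (by fun_prop)), integral_const_mul,
        integral_const_mul, integral_const_mul, hprod (fun t => cos (π * t) ^ 2)
        (fun t => sin (π * t) ^ 2), hprod (fun t => sin (π * t) * cos (π * t))
        (fun t => sin (π * t) * cos (π * t)), hprod (fun t => sin (π * t) ^ 2)
        (fun t => cos (π * t) ^ 2), integral_sin_pi_mul_sq, integral_cos_pi_mul_sq,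
        integral_sin_pi_mul_mul_cos_pi_mul]
      ring

theorem integral_openParallelogram_norm_fderiv_sineProduct_sq :
    ∫ z in openParallelogram L p, ‖fderiv ℝ (sineProduct L p) z‖ ^ 2 =
      π ^ 2 * (‖(ContinuousLinearMap.fst ℝ ℝ ℝ).comp (L : E2 →L[ℝ] ℝ × ℝ)‖ ^ 2 +
        ‖(ContinuousLinearMap.snd ℝ ℝ ℝ).comp (L : E2 →L[ℝ] ℝ × ℝ)‖ ^ 2) *
      ∫ z in openParallelogram L p, sineProduct L p z ^ 2 := by
  obtain ⟨c, -, hc⟩ := exists_setIntegral_comp_sub_eq_mul volume volume L p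
  set ℓ₁ := (ContinuousLinearMap.fst ℝ ℝ ℝ).comp (L : E2 →L[ℝ] ℝ × ℝ)
  set ℓ₂ := (ContinuousLinearMap.snd ℝ ℝ ℝ).comp (L : E2 →L[ℝ] ℝ × ℝ)
  have henergy : ∫ z in openParallelogram L p, ‖fderiv ℝ (sineProduct L p) z‖ ^ 2 =
      c * (π ^ 2 * (‖ℓ₁‖ ^ 2 + ‖ℓ₂‖ ^ 2) / 4) := by
    simp only [fderiv_sineProduct, norm_smul_add_smul_dual_sq]
    exact (hc (fun q => (π * (cos (π * q.1) * sin (π * q.2))) ^ 2 * ‖ℓ₁‖ ^ 2 + _ *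
      (π * (cos (π * q.1) * sin (π * q.2)) * (π * (sin (π * q.1) * cos (π * q.2)))) +
      (π * (sin (π * q.1) * cos (π * q.2))) ^ 2 * ‖ℓ₂‖ ^ 2) _).trans
      (congrArg (c * ·) (integral_unitSquare_gradient_sq _ _ _))
  have hmass : ∫ z in openParallelogram L p, sineProduct L p z ^ 2 = c * (1 / 4) := by
    refine (hc (fun q => (sin (π * q.1) * sin (π * q.2)) ^ 2) _).trans (congrArg (c * ·) ?_)
    simp only [mul_pow]
    rw [Measure.volume_eq_prod, setIntegral_prod_mul (fun t => sin (π * t) ^ 2)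
      (fun t => sin (π * t) ^ 2), integral_sin_pi_mul_sq]
    norm_num
  rw [henergy, hmass]
  ring

variable {L p}

theorem dEig1_le_of_openParallelogram_subset {Ω : Set E2} (hsub : openParallelogram L p ⊆ Ω) :
    dEig1 Ω ≤ π ^ 2 * (‖(ContinuousLinearMap.fst ℝ ℝ ℝ).comp (L : E2 →L[ℝ] ℝ × ℝ)‖ ^ 2 +
      ‖(ContinuousLinearMap.snd ℝ ℝ ℝ).comp (L : E2 →L[ℝ] ℝ × ℝ)‖ ^ 2) := by
  have hbound := dEig1_mul_setIntegral_sq_le hsub (contDiff_sineProduct L p)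
    (isOpen_openParallelogram L p) (isBounded_openParallelogram L p)
    (fun _ => sineProduct_pos L p) (fun _ => sineProduct_eq_zero_of_mem_frontier L p)
  have hcenter : L.symm (1 / 2, 1 / 2) + p ∈ openParallelogram L p := by
    simp only [openParallelogram, mem_preimage, add_sub_cancel_right,
      ContinuousLinearEquiv.apply_symm_apply]
    norm_num
  have hmass : 0 < ∫ z in openParallelogram L p, sineProduct L p z ^ 2 :=
    setIntegral_pos_of_continuous_of_isBounded (f := fun z => sineProduct L p z ^ 2)
      ((contDiff_sineProduct L p).continuous.pow 2) (fun _ => sq_nonneg _)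
      (isOpen_openParallelogram L p) (isBounded_openParallelogram L p) hcenter
      (pow_pos (sineProduct_pos L p hcenter) 2).ne'
  rw [integral_openParallelogram_norm_fderiv_sineProduct_sq] at hbound
  exact le_of_mul_le_mul_right hbound hmass

end SineProduct

theorem dEig1_le_of_parallelogram {Ω : Set E2} {a b p : E2} (h : cross a b ≠ 0)
    (hsub : ∀ θ ∈ Ioo (0 : ℝ) 1, ∀ ω ∈ Ioo (0 : ℝ) 1, p + (θ • a + ω • b) ∈ Ω) :
    dEig1 Ω ≤ π ^ 2 * (‖a‖ ^ 2 + ‖b‖ ^ 2) / cross a b ^ 2 := by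
  have hpar : openParallelogram (crossCoords a b h) p ⊆ Ω := fun z hz => by
    have hz' := hsub _ hz.1 _ hz.2
    rwa [← crossCoords_symm_apply h, ContinuousLinearEquiv.symm_apply_apply,
      add_sub_cancel] at hz'
  refine (dEig1_le_of_openParallelogram_subset hpar).trans_eq ?_
  rw [norm_sq_fst_crossCoords, norm_sq_snd_crossCoords]
  ring

/-! ### Neumann eigenvalue: transport to the unit interval -/

section Mollification

variable {E : Type*} [NormedAddCommGroup E] [NormedSpace ℝ E] [FiniteDimensional ℝ E]
  {f : E → ℝ} {C : NNReal}

theorem lipschitzWith_convolution_normed [MeasurableSpace E] [BorelSpace E] {μ : Measure E}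
    [μ.IsAddHaarMeasure] (φ : ContDiffBump (0 : E)) (hf : LipschitzWith C f) :
    LipschitzWith C (convolution (φ.normed μ) f (ContinuousLinearMap.lsmul ℝ ℝ) μ) := by
  refine .of_dist_le_mul fun x y => ?_
  have hfc := hf.continuous
  have hint (x : E) : Integrable (fun t => φ.normed μ t * f (x - t)) μ :=
    (φ.continuous_normed.mul (hfc.comp (continuous_const.sub continuous_id))
      ).integrable_of_hasCompactSupport φ.hasCompactSupport_normed.mul_right
  have hpointwise (t : E) : ‖φ.normed μ t * f (x - t) - φ.normed μ t * f (y - t)‖ ≤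
      φ.normed μ t * (C * dist x y) := by
    rw [← mul_sub, norm_mul, Real.norm_of_nonneg (φ.nonneg_normed t), ← dist_eq_norm,
      ← dist_sub_right x y t]
    exact mul_le_mul_of_nonneg_left (hf.dist_le_mul _ _) (φ.nonneg_normed t)
  calc
    _ = ‖∫ t, φ.normed μ t * f (x - t) - φ.normed μ t * f (y - t) ∂μ‖ := by
      rw [integral_sub (hint x) (hint y), ← dist_eq_norm]
      rfl
    _ ≤ ∫ t, φ.normed μ t * (C * dist x y) ∂μ :=
      norm_integral_le_of_norm_le (φ.integrable_normed.mul_const _) (.of_forall hpointwise)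
    _ = C * dist x y := by rw [integral_mul_const, φ.integral_normed, one_mul]

theorem exists_seq_contDiff_lipschitzWith_tendsto (hf : LipschitzWith C f) :
    ∃ g : ℕ → E → ℝ, (∀ n, ContDiff ℝ (⊤ : ℕ∞) (g n)) ∧ (∀ n, LipschitzWith C (g n)) ∧
      ∀ x, Tendsto (fun n => g n x) atTop (nhds (f x)) := by
  borelize E
  let φ (n : ℕ) : ContDiffBump (0 : E) :=
    ⟨1 / ((n : ℝ) + 1) / 2, 1 / ((n : ℝ) + 1), by positivity, half_lt_self (by positivity)⟩
  let μ : Measure E := Measure.addHaar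
  refine ⟨fun n => convolution ((φ n).normed μ) f (ContinuousLinearMap.lsmul ℝ ℝ) μ,
    fun n => ?_, fun n => lipschitzWith_convolution_normed (φ n) hf, fun x => ?_⟩
  · exact (φ n).hasCompactSupport_normed.contDiff_convolution_left _ (φ n).contDiff_normed
      hf.continuous.locallyIntegrable
  · exact ContDiffBump.convolution_tendsto_right_of_continuous
      tendsto_one_div_add_atTop_nhds_zero_nat hf.continuous x

end Mollification

section CosineTestFunctions

variable {Ω : Set E2} {K : E2 → ℝ} {C : NNReal}

theorem norm_fderiv_cos_comp_sq_le {E : Type*} [NormedAddCommGroup E] [NormedSpace ℝ E]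
    {K : E → ℝ} (hK : LipschitzWith C K) {x : E} (hd : DifferentiableAt ℝ K x) :
    ‖fderiv ℝ (fun x => cos (K x)) x‖ ^ 2 ≤ C ^ 2 * sin (K x) ^ 2 := by
  rw [hd.hasFDerivAt.cos.fderiv, norm_smul, mul_pow, mul_comm, Real.norm_eq_abs, sq_abs, neg_sq]
  gcongr
  exact norm_fderiv_le_of_lipschitz ℝ hK

theorem nEig1_mul_integral_cos_sub_average_sq_le (hb : Bornology.IsBounded Ω)
    (hK : LipschitzWith C K) (hsmooth : ContDiff ℝ (⊤ : ℕ∞) K) :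
    nEig1 Ω * ∫ x in Ω, (cos (K x) - ⨍ y in Ω, cos (K y)) ^ 2 ≤
      C ^ 2 * ∫ x in Ω, sin (K x) ^ 2 := by
  have hKc := hsmooth.continuous
  rw [← integral_const_mul (C ^ 2 : ℝ)]
  refine (nEig1_mul_integral_sub_average_sq_le hb hsmooth.cos).trans (integral_mono ?_ ?_ fun x =>
    norm_fderiv_cos_comp_sq_le hK (hsmooth.differentiable (by simp) x))
  · exact integrableOn_of_continuous_of_isBounded
      ((hsmooth.cos.continuous_fderiv (by simp)).norm.pow 2) hb
  · exact integrableOn_of_continuous_of_isBounded (by fun_prop) hb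

theorem tendsto_integral_comp_of_abs_le_one {α : Type*} [MeasurableSpace α] {μ : Measure α}
    [IsFiniteMeasure μ] {f : α → ℝ} {g : ℕ → α → ℝ} {h : ℝ → ℝ}
    (hh : Continuous h) (hh1 : ∀ t, |h t| ≤ 1) (hg : ∀ n, AEStronglyMeasurable (g n) μ)
    (hlim : ∀ x, Tendsto (fun n => g n x) atTop (nhds (f x))) :
    Tendsto (fun n => ∫ x, h (g n x) ∂μ) atTop (nhds (∫ x, h (f x) ∂μ)) :=
  tendsto_integral_of_dominated_convergence (fun _ => 1)
    (fun n => hh.comp_aestronglyMeasurable (hg n)) (integrable_const 1)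
    (fun _ => .of_forall fun _ => hh1 _) (.of_forall fun x => (hh.tendsto _).comp (hlim x))

theorem nEig1_mul_integral_cos_sq_le (hb : Bornology.IsBounded Ω) (hK : LipschitzWith C K)
    (hmean : ∫ x in Ω, cos (K x) = 0) :
    nEig1 Ω * ∫ x in Ω, cos (K x) ^ 2 ≤ C ^ 2 * ∫ x in Ω, sin (K x) ^ 2 := by
  have : IsFiniteMeasure (volume.restrict Ω) :=
    isFiniteMeasure_restrict.2 hb.measure_lt_top.ne
  obtain ⟨k, hsmooth, hlip, hlim⟩ := exists_seq_contDiff_lipschitzWith_tendsto hK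
  have hint {h : ℝ → ℝ} (hh : Continuous h) (hh1 : ∀ t, |h t| ≤ 1) :
      Tendsto (fun n => ∫ x in Ω, h (k n x)) atTop (nhds (∫ x in Ω, h (K x))) :=
    tendsto_integral_comp_of_abs_le_one hh hh1
      (fun n => (hlip n).continuous.aestronglyMeasurable) hlim
  have hcos := hint continuous_cos abs_cos_le_one
  have havg : Tendsto (fun n => ⨍ x in Ω, cos (k n x)) atTop (nhds 0) := by
    simpa only [setAverage_eq, hmean, smul_zero] using hcos.const_smul (volume.real Ω)⁻¹
  have hcos_sq := hint (h := fun t => cos t ^ 2) (by fun_prop)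
    fun t => by simpa using abs_cos_le_one t
  have hsin_sq := hint (h := fun t => sin t ^ 2) (by fun_prop)
    fun t => by simpa using abs_sin_le_one t
  have hvar : Tendsto (fun n => ∫ x in Ω, (cos (k n x) - ⨍ y in Ω, cos (k n y)) ^ 2) atTop
      (nhds (∫ x in Ω, cos (K x) ^ 2)) := by
    have hmem (n : ℕ) : MemLp (fun x => cos (k n x)) 2 (volume.restrict Ω) :=
      memLp_two_restrict_of_continuous_of_isBounded (hsmooth n).cos.continuous hb
    simp only [integral_sub_const_sq (hmem _)]
    simpa using (hcos_sq.sub ((havg.const_mul 2).mul hcos)).add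
      ((havg.pow 2).mul_const ((volume.restrict Ω).real univ))
  exact le_of_tendsto_of_tendsto' (hvar.const_mul _) (hsin_sq.const_mul _) fun n =>
    nEig1_mul_integral_cos_sub_average_sq_le hb (hlip n) (hsmooth n)

end CosineTestFunctions

section ProbabilityIntegralTransform

open ProbabilityTheory

variable {ν : Measure ℝ} {t : ℝ}

theorem exists_cdf_preimage_Iic_eq_Iic (hcont : Continuous (cdf ν))
    (hne : (cdf ν ⁻¹' Iic t).Nonempty) (ht : t < 1) :
    ∃ x, cdf ν x = t ∧ cdf ν ⁻¹' Iic t = Iic x := by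
  obtain ⟨b, hb⟩ := ((tendsto_cdf_atTop ν).eventually_const_lt ht).exists
  have hbdd : BddAbove (cdf ν ⁻¹' Iic t) :=
    ⟨b, fun x hx => ((monotone_cdf ν).reflect_lt (lt_of_le_of_lt hx hb)).le⟩
  have hmem : sSup (cdf ν ⁻¹' Iic t) ∈ cdf ν ⁻¹' Iic t :=
    (isClosed_Iic.preimage hcont).csSup_mem hne hbdd
  obtain ⟨y, hy⟩ : t ∈ range (cdf ν) :=
    mem_range_of_exists_le_of_exists_ge hcont hne ⟨b, hb.le⟩
  exact ⟨_, le_antisymm hmem (hy.symm.trans_le (monotone_cdf ν (le_csSup hbdd hy.le))),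
    Subset.antisymm (fun x hx => le_csSup hbdd hx) fun x hx => (monotone_cdf ν hx).trans hmem⟩

variable [IsProbabilityMeasure ν]

theorem measure_cdf_preimage_Iic (hcont : Continuous (cdf ν)) (ht : t < 1) :
    ν (cdf ν ⁻¹' Iic t) = ENNReal.ofReal t := by
  rcases (cdf ν ⁻¹' Iic t).eq_empty_or_nonempty with hempty | hne
  · have ht0 : t ≤ 0 := ge_of_tendsto' (tendsto_cdf_atBot ν) fun x =>
      le_of_not_ge fun hx => (hempty ▸ notMem_empty x : x ∉ cdf ν ⁻¹' Iic t) hx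
    rw [hempty, measure_empty, ENNReal.ofReal_of_nonpos ht0]
  · obtain ⟨x, rfl, hx⟩ := exists_cdf_preimage_Iic_eq_Iic hcont hne ht
    rw [hx, ofReal_cdf]

theorem map_cdf_eq_volume_restrict (hcont : Continuous (cdf ν)) :
    ν.map (cdf ν) = volume.restrict (Ioo 0 1) := by
  rw [Measure.restrict_congr_set Ioo_ae_eq_Icc]
  have : IsProbabilityMeasure (ν.map (cdf ν)) := Measure.isProbabilityMeasure_map (by fun_prop)
  refine Measure.ext_of_Iic _ _ fun t => ?_
  rw [Measure.map_apply hcont.measurable measurableSet_Iic,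
    Measure.restrict_apply measurableSet_Iic]
  have hinter : Iic t ∩ Icc 0 1 = Icc 0 (min 1 t) := by grind
  rw [hinter, Real.volume_Icc, sub_zero]
  rcases lt_or_ge t 1 with ht | ht
  · rw [measure_cdf_preimage_Iic hcont ht, min_eq_right ht.le]
  · have huniv : cdf ν ⁻¹' Iic t = univ := eq_univ_of_forall fun x => (cdf_le_one ν x).trans ht
    rw [huniv, measure_univ, min_eq_left ht, ENNReal.ofReal_one]

theorem lipschitzWith_cdf {C : NNReal} (hν : ν ≤ C • volume) : LipschitzWith C (cdf ν) := by
  refine LipschitzWith.of_le_add_mul C fun x y => ?_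
  rcases le_total x y with hxy | hyx
  · exact (monotone_cdf ν hxy).trans (le_add_of_nonneg_right (by positivity))
  · have hIoc : ν.real (Ioc y x) ≤ C * (x - y) := by
      refine ENNReal.toReal_le_of_le_ofReal (mul_nonneg C.coe_nonneg (sub_nonneg.2 hyx)) ?_
      rw [ENNReal.ofReal_mul C.coe_nonneg, ← Real.volume_Ioc]
      exact (hν _).trans_eq (by rw [ENNReal.ofReal_coe_nnreal]; rfl)
    rw [cdf_eq_real, cdf_eq_real, ← Iic_union_Ioc_eq_Iic hyx, Real.dist_eq,
      abs_of_nonneg (sub_nonneg.2 hyx)]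
    exact (measureReal_union_le _ _).trans (by gcongr)

end ProbabilityIntegralTransform

section ChordBound

open ProbabilityTheory

variable {Ω : Set E2} {M : NNReal}

theorem map_apply_zero_restrict_le (hΩ : MeasurableSet Ω)
    (hM : ∀ x, volume {y | (!₂[x, y] : E2) ∈ Ω} ≤ M) :
    (volume.restrict Ω).map (fun z : E2 => z 0) ≤ M • volume := by
  have hX : Measurable fun z : E2 => z 0 := by fun_prop
  refine Measure.le_iff.2 fun s hs => ?_
  rw [Measure.map_apply hX hs, Measure.restrict_apply (hX hs),
    ← volume_preserving_vec2.measure_preimage_emb measurableEmbedding_vec2,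
    Measure.volume_eq_prod, Measure.prod_apply
      (measurableEmbedding_vec2.measurable ((hX hs).inter hΩ))]
  calc
    _ ≤ ∫⁻ x, s.indicator (fun _ => (M : ENNReal)) x := by
      refine lintegral_mono fun x => ?_
      by_cases hx : x ∈ s
      · rw [indicator_of_mem hx]
        exact (measure_mono fun y hy => hy.2).trans (hM x)
      · rw [indicator_of_notMem hx, nonpos_iff_eq_zero]
        convert measure_empty (μ := volume)
        exact eq_empty_of_forall_notMem fun y hy => hx hy.1
    _ = _ := by
      rw [lintegral_indicator_const hs]
      rfl

variable (Ω) in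
/-- The distribution of the first coordinate of a uniformly distributed point of `Ω`. -/
def abscissaLaw : Measure ℝ := (cond volume Ω).map fun z : E2 => z 0

theorem integral_abscissaLaw {h : ℝ → ℝ} (hh : Continuous h) :
    ∫ x, h x ∂(abscissaLaw Ω) = (volume Ω).toReal⁻¹ * ∫ z in Ω, h (z 0) := by
  rw [abscissaLaw, integral_map (by fun_prop) hh.aestronglyMeasurable, ProbabilityTheory.cond,
    integral_smul_measure, ENNReal.toReal_inv, smul_eq_mul]

theorem abscissaLaw_le (hΩ : MeasurableSet Ω) (h0 : volume Ω ≠ 0) (htop : volume Ω ≠ ⊤)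
    (hM : ∀ x, volume {y | (!₂[x, y] : E2) ∈ Ω} ≤ M) :
    abscissaLaw Ω ≤ (M / (volume Ω).toNNReal) • volume := by
  have hV : ((volume Ω).toNNReal : ENNReal)⁻¹ = (volume Ω)⁻¹ := by rw [ENNReal.coe_toNNReal htop]
  refine Measure.le_iff'.2 fun s => ?_
  rw [abscissaLaw, ProbabilityTheory.cond, Measure.map_smul, Measure.smul_apply]
  calc
    (volume Ω)⁻¹ • (volume.restrict Ω).map (fun z : E2 => z 0) s
      ≤ (volume Ω)⁻¹ • (M • volume) s := by
      gcongr
      exact map_apply_zero_restrict_le hΩ hM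
    _ = _ := by
      rw [← hV, ← ENNReal.coe_inv (ENNReal.toNNReal_ne_zero.2 ⟨h0, htop⟩), div_eq_inv_mul, mul_smul]
      rfl

theorem nEig1_le_of_volume_chord_le (ho : IsOpen Ω) (hb : Bornology.IsBounded Ω)
    (hne : Ω.Nonempty) (hM : ∀ x, volume {y | (!₂[x, y] : E2) ∈ Ω} ≤ M) :
    nEig1 Ω ≤ (π * M / (volume Ω).toReal) ^ 2 := by
  have h0 : volume Ω ≠ 0 := (ho.measure_pos _ hne).ne'
  have htop : volume Ω ≠ ⊤ := hb.measure_lt_top.ne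
  have hV : 0 < (volume Ω).toReal := ENNReal.toReal_pos h0 htop
  have := cond_isProbabilityMeasure_of_finite h0 htop
  have : IsProbabilityMeasure (abscissaLaw Ω) := Measure.isProbabilityMeasure_map (by fun_prop)
  have hF := lipschitzWith_cdf (abscissaLaw_le ho.measurableSet h0 htop hM)
  set F := cdf (abscissaLaw Ω)
  have htransport {h : ℝ → ℝ} (hh : Continuous h) :
      ∫ z in Ω, h (F (z 0)) = (volume Ω).toReal * ∫ t in Ioo 0 1, h t := by
    rw [← map_cdf_eq_volume_restrict hF.continuous, integral_map hF.continuous.aemeasurable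
      hh.aestronglyMeasurable, integral_abscissaLaw (h := fun t => h (F t))
      (hh.comp hF.continuous), mul_inv_cancel_left₀ hV.ne']
  have hcoord : LipschitzWith 1 fun z : E2 => z 0 := LipschitzWith.of_dist_le_mul fun x y => by
    simpa [dist_eq_norm] using PiLp.norm_apply_le (x - y) 0
  have hK := (lipschitzWith_smul π).comp (hF.comp hcoord)
  have hmean : ∫ z in Ω, cos (π * F (z 0)) = 0 := by
    rw [htransport (h := fun t => cos (π * t)) (by fun_prop), integral_cos_pi_mul, mul_zero]
  have hbound := nEig1_mul_integral_cos_sq_le hb hK hmean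
  simp only [Function.comp_def, smul_eq_mul] at hbound
  rw [htransport (h := fun t => cos (π * t) ^ 2) (by fun_prop), integral_cos_pi_mul_sq,
    htransport (h := fun t => sin (π * t) ^ 2) (by fun_prop), integral_sin_pi_mul_sq] at hbound
  refine (le_of_mul_le_mul_right hbound (by positivity)).trans_eq ?_
  simp [abs_of_pos pi_pos, mul_div_assoc, ENNReal.toReal]

end ChordBound

/-! ### Triangles inscribed in convex sets -/

theorem add_smul_sub_add_smul_sub_mem_of_convex {E : Type*} [AddCommGroup E] [Module ℝ E]
    {s : Set E} (hs : Convex ℝ s) {p q r : E} (hp : p ∈ s) (hq : q ∈ s) (hr : r ∈ s) {α β : ℝ}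
    (hα : 0 ≤ α) (hβ : 0 ≤ β) (hαβ : α + β ≤ 1) : p + (α • (q - p) + β • (r - p)) ∈ s := by
  have hmem := hs.sum_mem (t := Finset.univ) (w := ![1 - α - β, α, β]) (z := ![p, q, r])
    (by simpa [Fin.forall_fin_succ, hα, hβ, sub_sub] using hαβ)
    (by simp [Fin.sum_univ_three, sub_sub, add_assoc]) (by simp [Fin.forall_fin_succ, hp, hq, hr])
  convert hmem using 1
  simp only [Fin.sum_univ_three, Matrix.cons_val_zero, Matrix.cons_val_one, Matrix.cons_val]
  module

theorem volume_parallelepiped_pair (a b : E2) :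
    volume (parallelepiped ![a, b]) = ENNReal.ofReal |cross a b| := by
  rw [← (EuclideanSpace.basisFun (Fin 2) ℝ).addHaar_eq_volume, Measure.addHaar_parallelepiped,
    Module.Basis.det_apply, Matrix.det_fin_two]
  simp [Module.Basis.toMatrix_apply, cross, mul_comm]

theorem abs_cross_sub_sub_le {Ω : Set E2} (hc : Convex ℝ Ω) (hfin : volume Ω ≠ ⊤) {p q r : E2}
    (hp : p ∈ Ω) (hq : q ∈ Ω) (hr : r ∈ Ω) :
    |cross (q - p) (r - p)| ≤ 4 * (volume Ω).toReal := by
  have hsub : parallelepiped ![(1 / 2 : ℝ) • (q - p), (1 / 2 : ℝ) • (r - p)] ⊆ (p + ·) ⁻¹' Ω := by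
    intro z hz
    obtain ⟨t, ⟨ht0, ht1⟩, rfl⟩ := (mem_parallelepiped_iff _ z).1 hz
    simp only [Pi.le_def, Fin.forall_fin_two, Pi.zero_apply, Pi.one_apply] at ht0 ht1
    have hmem := add_smul_sub_add_smul_sub_mem_of_convex hc hp hq hr
      (α := t 0 * (1 / 2)) (β := t 1 * (1 / 2)) (by linarith) (by linarith) (by linarith)
    simpa [Fin.sum_univ_two, smul_smul] using hmem
  have hle := measure_mono (μ := volume) hsub
  rw [measure_preimage_add, volume_parallelepiped_pair,
    ENNReal.ofReal_le_iff_le_toReal hfin] at hle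
  have hcross : cross ((1 / 2 : ℝ) • (q - p)) ((1 / 2 : ℝ) • (r - p)) =
      cross (q - p) (r - p) / 4 := by
    simp only [cross, PiLp.smul_apply, smul_eq_mul]
    ring
  rw [hcross, abs_div, abs_of_pos (four_pos : (0 : ℝ) < 4)] at hle
  linarith

theorem dEig1_le_of_triangle {Ω : Set E2} (hc : Convex ℝ Ω) {p q r : E2} (hp : p ∈ Ω) (hq : q ∈ Ω)
    (hr : r ∈ Ω) (h : cross (r - p) (q - p) ≠ 0) {ε : ℝ} (hε : ε ∈ Ioo (0 : ℝ) 1) :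
    dEig1 Ω ≤ π ^ 2 * (‖r - p‖ ^ 2 / (1 - ε) ^ 2 + ‖q - p‖ ^ 2 / ε ^ 2) /
      cross (r - p) (q - p) ^ 2 := by
  obtain ⟨hε0, hε1⟩ := hε
  have hε1' : 0 < 1 - ε := by linarith
  have hcross : cross (ε • (r - p)) ((1 - ε) • (q - p)) = ε * (1 - ε) * cross (r - p) (q - p) := by
    simp only [cross, PiLp.smul_apply, smul_eq_mul]
    ring
  have hbound := dEig1_le_of_parallelogram (Ω := Ω) (p := p)
    (a := ε • (r - p)) (b := (1 - ε) • (q - p)) (by rw [hcross]; positivity) fun θ hθ ω hω => by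
      simp only [smul_smul]
      refine add_smul_sub_add_smul_sub_mem_of_convex hc hp hr hq
        (mul_nonneg hθ.1.le hε0.le) (mul_nonneg hω.1.le hε1'.le) ?_
      nlinarith [hθ.2, hω.2]
  refine hbound.trans_eq ?_
  rw [hcross, norm_smul, norm_smul, Real.norm_of_nonneg hε0.le, Real.norm_of_nonneg hε1'.le]
  field_simp

/-! ### Vertical chords -/

theorem exists_gt_vertical_mem {Ω : Set E2} (ho : IsOpen Ω) {p : E2} (hp : p ∈ Ω) :
    ∃ q ∈ Ω, p 0 = q 0 ∧ p 1 < q 1 := by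
  have hnear : ∀ᶠ t : ℝ in nhds (p 1), (!₂[p 0, t] : E2) ∈ Ω := by
    refine (show Continuous fun t : ℝ => (!₂[p 0, t] : E2) by fun_prop).continuousAt.eventually_mem
      (ho.mem_nhds ?_)
    rwa [show (!₂[p 0, p 1] : E2) = p from by ext i; fin_cases i <;> rfl]
  obtain ⟨t, ht, hmem⟩ := (hnear.filter_mono nhdsWithin_le_nhds |>.and
    (self_mem_nhdsWithin (s := Ioi (p 1)))).exists
  exact ⟨_, ht, rfl, hmem⟩

theorem exists_nEig1_le_vertical_chord {Ω : Set E2} (ho : IsOpen Ω) (hb : Bornology.IsBounded Ω)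
    (hne : Ω.Nonempty) {ε : ℝ} (hε : ε ∈ Ioo (0 : ℝ) 1) :
    ∃ p ∈ Ω, ∃ q ∈ Ω, p 0 = q 0 ∧ p 1 < q 1 ∧
      ((1 - ε) * (volume Ω).toReal) ^ 2 * nEig1 Ω ≤ (π * (q 1 - p 1)) ^ 2 := by
  set S : Set ℝ := {m | ∃ p ∈ Ω, ∃ q ∈ Ω, p 0 = q 0 ∧ q 1 - p 1 = m}
  have hSb : BddAbove S := by
    refine ⟨Metric.diam Ω, ?_⟩
    rintro _ ⟨p, hp, q, hq, -, rfl⟩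
    exact (le_abs_self _).trans ((PiLp.norm_apply_le (q - p) 1).trans
      ((dist_eq_norm q p).symm.trans_le (Metric.dist_le_diam_of_mem hb hq hp)))
  have hSpos : 0 < sSup S := by
    obtain ⟨p, hp⟩ := hne
    obtain ⟨q, hq, hpq, hlt⟩ := exists_gt_vertical_mem ho hp
    exact (sub_pos.2 hlt).trans_le (le_csSup hSb ⟨p, hp, q, hq, hpq, rfl⟩)
  have hchord : ∀ x, volume {y | (!₂[x, y] : E2) ∈ Ω} ≤ ((sSup S).toNNReal : NNReal) := by
    refine fun x => (Real.volume_le_diam _).trans (Metric.ediam_le fun y hy z hz => ?_)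
    have hle : |y - z| ≤ sSup S := abs_le.2
      ⟨neg_le.1 ((neg_sub y z).trans_le (le_csSup hSb ⟨_, hy, _, hz, rfl, rfl⟩)),
        le_csSup hSb ⟨_, hz, _, hy, rfl, rfl⟩⟩
    rw [edist_dist, Real.dist_eq]
    exact ENNReal.ofReal_le_ofReal hle
  have hneumann := nEig1_le_of_volume_chord_le ho hb hne hchord
  rw [Real.coe_toNNReal _ hSpos.le] at hneumann
  obtain ⟨_, ⟨p, hp, q, hq, hpq, rfl⟩, hlong⟩ := exists_lt_of_lt_csSup (s := S)
    (nonempty_iff_ne_empty.2 fun h => by simp [h] at hSpos)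
    (show (1 - ε) * sSup S < sSup S by nlinarith [hε.1])
  have hε1 : 0 < 1 - ε := sub_pos.2 hε.2
  refine ⟨p, hp, q, hq, hpq, sub_pos.1 (lt_trans (by positivity) hlong), ?_⟩
  have hV : 0 < (volume Ω).toReal :=
    ENNReal.toReal_pos (ho.measure_pos _ hne).ne' hb.measure_lt_top.ne
  calc ((1 - ε) * (volume Ω).toReal) ^ 2 * nEig1 Ω
      ≤ ((1 - ε) * (volume Ω).toReal) ^ 2 * (π * sSup S / (volume Ω).toReal) ^ 2 := by gcongr
    _ = (π * ((1 - ε) * sSup S)) ^ 2 := by field_simp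
    _ ≤ (π * (q 1 - p 1)) ^ 2 := by gcongr

/-! ### The spectral product of a thin convex set -/

/-- The scale-invariant functional `F(Ω) = |Ω|² λ₁(Ω) μ₁(Ω)`. -/
def spectralProduct (Ω : Set E2) : ℝ := (volume Ω).toReal ^ 2 * dEig1 Ω * nEig1 Ω

/-- The upper bound for `spectralProduct` obtained from an inscribed triangle with a vertical side
and a far apex. Here `t` bounds the aspect ratio of the triangle and `ε` is the fraction of the
triangle sacrificed to inscribe a parallelogram in it; the bound tends to `π ^ 4` as first `t` and
then `ε` tend to zero. -/
def thinBound (ε t : ℝ) : ℝ :=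
  π ^ 4 * ((1 + t ^ 2) / (1 - ε) ^ 4 + t ^ 2 / (ε ^ 2 * (1 - ε) ^ 2))

theorem thinBound_mono {ε s t : ℝ} (hs : 0 ≤ s) (hst : s ≤ t) : thinBound ε s ≤ thinBound ε t := by
  unfold thinBound
  gcongr

theorem spectralProduct_nonneg (Ω : Set E2) : 0 ≤ spectralProduct Ω :=
  mul_nonneg (mul_nonneg (sq_nonneg _) (dEig1_nonneg Ω)) (nEig1_nonneg Ω)

theorem spectralProduct_preimage_linearIsometryEquiv (T : E2 ≃ₗᵢ[ℝ] E2) (Ω : Set E2) :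
    spectralProduct (T ⁻¹' Ω) = spectralProduct Ω := by
  rw [spectralProduct, dEig1_preimage_linearIsometryEquiv, nEig1_preimage_linearIsometryEquiv,
    T.measurePreserving.measure_preimage_emb T.toHomeomorph.measurableEmbedding, spectralProduct]

section SingleSet

variable {Ω : Set E2} {ε t : ℝ}

theorem spectralProduct_le_thinBound_of_vertical_chord (hc : Convex ℝ Ω) (hε : ε ∈ Ioo (0 : ℝ) 1)
    {p q r : E2} (hp : p ∈ Ω) (hq : q ∈ Ω) (hr : r ∈ Ω) (hpq : p 0 = q 0) (hlt : p 1 < q 1)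
    (hn : ((1 - ε) * (volume Ω).toReal) ^ 2 * nEig1 Ω ≤ (π * (q 1 - p 1)) ^ 2)
    (hrp : r 0 ≠ p 0) (hwidth : q 1 - p 1 ≤ t * |r 0 - p 0|)
    (hslope : |r 1 - p 1| ≤ t * |r 0 - p 0|) : spectralProduct Ω ≤ thinBound ε t := by
  have hε0 : 0 < ε := hε.1
  have hε1 : 0 < 1 - ε := sub_pos.2 hε.2
  have hm : 0 < q 1 - p 1 := sub_pos.2 hlt
  have hx : r 0 - p 0 ≠ 0 := sub_ne_zero.2 hrp
  have hcross : cross (r - p) (q - p) = (r 0 - p 0) * (q 1 - p 1) := by simp [cross, hpq]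
  have hd := dEig1_le_of_triangle hc hp hq hr (hcross ▸ mul_ne_zero hx hm.ne') hε
  have hnorm_r : ‖r - p‖ ^ 2 = (r 0 - p 0) ^ 2 + (r 1 - p 1) ^ 2 := by
    simp [EuclideanSpace.norm_sq_eq]
  have hnorm_q : ‖q - p‖ ^ 2 = (q 1 - p 1) ^ 2 := by simp [EuclideanSpace.norm_sq_eq, hpq]
  rw [hcross, hnorm_r, hnorm_q] at hd
  set m := q 1 - p 1
  set x := r 0 - p 0
  have hslope_sq : (r 1 - p 1) ^ 2 ≤ (t * x) ^ 2 :=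
    sq_le_sq.2 (hslope.trans (by rw [abs_mul]; gcongr; exact le_abs_self t))
  have hwidth_sq : m ^ 2 ≤ (t * x) ^ 2 :=
    sq_le_sq.2 ((abs_of_pos hm).trans_le
      (hwidth.trans (by rw [abs_mul]; gcongr; exact le_abs_self t)))
  calc spectralProduct Ω
      = dEig1 Ω * (((1 - ε) * (volume Ω).toReal) ^ 2 * nEig1 Ω) / (1 - ε) ^ 2 := by
        rw [spectralProduct]; field_simp
    _ ≤ π ^ 2 * ((x ^ 2 + (r 1 - p 1) ^ 2) / (1 - ε) ^ 2 + m ^ 2 / ε ^ 2) / (x * m) ^ 2 *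
          (π * m) ^ 2 / (1 - ε) ^ 2 := by
        have := nEig1_nonneg Ω
        gcongr
    _ ≤ π ^ 2 * ((x ^ 2 + (t * x) ^ 2) / (1 - ε) ^ 2 + (t * x) ^ 2 / ε ^ 2) / (x * m) ^ 2 *
          (π * m) ^ 2 / (1 - ε) ^ 2 := by gcongr
    _ = thinBound ε t := by rw [thinBound]; field_simp

theorem spectralProduct_le_thinBound_of_horizontal (ho : IsOpen Ω) (hb : Bornology.IsBounded Ω)
    (hc : Convex ℝ Ω) (hε : ε ∈ Ioo (0 : ℝ) 1) {a b : E2} (ha : a ∈ Ω) (hbΩ : b ∈ Ω)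
    (hab : b 1 = a 1) (hlt : a 0 < b 0) :
    spectralProduct Ω ≤ thinBound ε (16 * (volume Ω).toReal / (b 0 - a 0) ^ 2) := by
  obtain ⟨p, hp, q, hq, hpq, hm, hn⟩ := exists_nEig1_le_vertical_chord ho hb ⟨a, ha⟩ hε
  have hl : 0 < b 0 - a 0 := sub_pos.2 hlt
  obtain ⟨r, hr, hra, hfar⟩ : ∃ r ∈ Ω, r 1 = a 1 ∧ (b 0 - a 0) / 2 ≤ |r 0 - p 0| := by
    rcases le_total (p 0) ((a 0 + b 0) / 2) with h | h
    · exact ⟨b, hbΩ, hab, le_trans (by linarith) (le_abs_self _)⟩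
    · exact ⟨a, ha, rfl, le_trans (by linarith) (neg_le_abs _)⟩
  have hwidth : (q 1 - p 1) * |r 0 - p 0| ≤ 4 * (volume Ω).toReal := by
    simpa [cross, hpq, abs_mul, abs_of_pos (sub_pos.2 hm)] using
      abs_cross_sub_sub_le hc hb.measure_lt_top.ne hp hq hr
  have hheight : (b 0 - a 0) * |r 1 - p 1| ≤ 4 * (volume Ω).toReal := by
    simpa [cross, hab, hra, abs_mul, abs_of_pos hl, abs_sub_comm (a 1)] using
      abs_cross_sub_sub_le hc hb.measure_lt_top.ne ha hbΩ hp
  set V := (volume Ω).toReal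
  set l := b 0 - a 0
  set x := |r 0 - p 0| with hxdef
  have hx : 0 < x := by linarith
  refine spectralProduct_le_thinBound_of_vertical_chord hc hε hp hq hr hpq hm hn
    (sub_ne_zero.1 (abs_pos.1 hx)) ?_ ?_
  · rw [← hxdef, div_mul_eq_mul_div, le_div_iff₀ (by positivity)]
    calc (q 1 - p 1) * l ^ 2 ≤ (q 1 - p 1) * (2 * x) ^ 2 := by gcongr; linarith
      _ = 4 * x * ((q 1 - p 1) * x) := by ring
      _ ≤ 4 * x * (4 * V) := by gcongr
      _ = 16 * V * x := by ring
  · rw [← hxdef, div_mul_eq_mul_div, le_div_iff₀ (by positivity)]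
    calc |r 1 - p 1| * l ^ 2 = l * (l * |r 1 - p 1|) := by ring
      _ ≤ (2 * x) * (4 * V) := by gcongr; linarith
      _ ≤ 16 * V * x := by nlinarith [mul_nonneg hx.le (ENNReal.toReal_nonneg (a := volume Ω))]

theorem spectralProduct_le_thinBound_of_mem (ho : IsOpen Ω) (hb : Bornology.IsBounded Ω)
    (hc : Convex ℝ Ω) (hε : ε ∈ Ioo (0 : ℝ) 1) {a b : E2} (ha : a ∈ Ω) (hbΩ : b ∈ Ω)
    (hab : a ≠ b) : spectralProduct Ω ≤ thinBound ε (16 * (volume Ω).toReal / dist a b ^ 2) := by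
  set w : E2 := !₂[‖b - a‖, 0] with hw
  set T := (ℝ ∙ (b - a - w))ᗮ.reflection
  have hT : T b - T a = w := by
    rw [← map_sub]
    exact Submodule.reflection_sub (by simp [hw, EuclideanSpace.norm_eq])
  have hT0 : T b 0 - T a 0 = dist a b := by
    rw [← PiLp.sub_apply, hT, dist_comm, dist_eq_norm]
    rfl
  have hT1 : T b 1 - T a 1 = 0 := by
    rw [← PiLp.sub_apply, hT]
    rfl
  have hvol : volume (T ⁻¹' Ω) = volume Ω :=
    T.measurePreserving.measure_preimage_emb T.toHomeomorph.measurableEmbedding Ω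
  have hbound := spectralProduct_le_thinBound_of_horizontal (ho.preimage T.continuous)
    (T.antilipschitz.isBounded_preimage hb) (hc.linear_preimage T.toLinearEquiv.toLinearMap) hε
    (a := T a) (b := T b) (by simpa [T] using ha) (by simpa [T] using hbΩ) (sub_eq_zero.1 hT1)
    (sub_pos.1 (hT0 ▸ dist_pos.2 hab))
  rwa [spectralProduct_preimage_linearIsometryEquiv, hvol, hT0] at hbound

theorem spectralProduct_le_thinBound (hne : Ω.Nonempty) (ho : IsOpen Ω)
    (hb : Bornology.IsBounded Ω) (hc : Convex ℝ Ω) (hε : ε ∈ Ioo (0 : ℝ) 1) :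
    spectralProduct Ω ≤ thinBound ε (64 * (volume Ω).toReal / Metric.diam Ω ^ 2) := by
  have hd : 0 < Metric.diam Ω := by
    obtain ⟨p, hp⟩ := hne
    obtain ⟨q, hq, -, hlt⟩ := exists_gt_vertical_mem ho hp
    exact Metric.diam_pos ⟨p, hp, q, hq, fun h => hlt.ne (h ▸ rfl)⟩ hb
  obtain ⟨a, ha, b, hbΩ, hab⟩ : ∃ a ∈ Ω, ∃ b ∈ Ω, Metric.diam Ω / 2 < dist a b := by
    by_contra! h
    linarith [Metric.diam_le_of_forall_dist_le (half_pos hd).le h]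
  have hab0 : 0 < dist a b := (half_pos hd).trans hab
  refine (spectralProduct_le_thinBound_of_mem ho hb hc hε ha hbΩ (dist_pos.1 hab0)).trans
    (thinBound_mono (by positivity) ?_)
  calc 16 * (volume Ω).toReal / dist a b ^ 2
      ≤ 16 * (volume Ω).toReal / (Metric.diam Ω / 2) ^ 2 := by gcongr
    _ = 64 * (volume Ω).toReal / Metric.diam Ω ^ 2 := by ring

theorem volume_le_pi_mul_diam_sq (hb : Bornology.IsBounded Ω) :
    (volume Ω).toReal ≤ π * Metric.diam Ω ^ 2 := by
  rcases Ω.eq_empty_or_nonempty with rfl | ⟨p, hp⟩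
  · simp
  have hsub : Ω ⊆ Metric.closedBall p (Metric.diam Ω) := fun x hx =>
    Metric.dist_le_diam_of_mem hb hx hp
  refine (ENNReal.toReal_mono measure_closedBall_lt_top.ne (measure_mono hsub)).trans_eq ?_
  simp [EuclideanSpace.volume_closedBall_fin_two, Metric.diam_nonneg, pi_pos.le, mul_comm]

end SingleSet

theorem bddAbove_spectralProduct_convex :
    BddAbove {r : ℝ | ∃ Ω' : Set E2, Ω'.Nonempty ∧ IsOpen Ω' ∧ Bornology.IsBounded Ω' ∧
      Convex ℝ Ω' ∧ r = spectralProduct Ω'} := by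
  refine ⟨thinBound (1 / 2) (64 * π), ?_⟩
  rintro _ ⟨Ω, hne, ho, hb, hc, rfl⟩
  refine (spectralProduct_le_thinBound hne ho hb hc (by norm_num)).trans
    (thinBound_mono (by positivity) ?_)
  rw [mul_div_assoc]
  gcongr
  exact div_le_of_le_mul₀ (by positivity) pi_pos.le (volume_le_pi_mul_diam_sq hb)

theorem volume_unitDisc : (volume unitDisc).toReal = π := by
  simp [unitDisc, EuclideanSpace.volume_ball_fin_two, pi_pos.le]

theorem pi_pow_four_lt_spectralProduct_unitDisc : π ^ 4 < spectralProduct unitDisc := by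
  have hpi : π ^ 2 < 10 := by nlinarith [pi_lt_d2, pi_pos]
  rw [spectralProduct, volume_unitDisc]
  calc π ^ 4 = π ^ 2 * π ^ 2 := by ring
    _ < π ^ 2 * 10 := by gcongr
    _ = π ^ 2 * 5 * 2 := by ring
    _ ≤ π ^ 2 * dEig1 unitDisc * nEig1 unitDisc := by
      have := dEig1_nonneg unitDisc
      gcongr
      exacts [five_le_dEig1_unitDisc, two_le_nEig1_unitDisc]

theorem pi_pow_four_lt_sSup_spectralProduct :
    π ^ 4 < sSup {r : ℝ | ∃ Ω' : Set E2, Ω'.Nonempty ∧ IsOpen Ω' ∧ Bornology.IsBounded Ω' ∧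
      Convex ℝ Ω' ∧ r = spectralProduct Ω'} :=
  pi_pow_four_lt_spectralProduct_unitDisc.trans_le <| le_csSup bddAbove_spectralProduct_convex
    ⟨unitDisc, ⟨0, by simp [unitDisc]⟩, Metric.isOpen_ball, isBounded_unitDisc, convex_ball _ _,
      rfl⟩

theorem exists_thinBound_zero_lt {η : ℝ} (hη : π ^ 4 < η) :
    ∃ ε ∈ Ioo (0 : ℝ) 1, thinBound ε 0 < η := by
  have hlim : Tendsto (fun ε : ℝ => thinBound ε 0) (nhdsWithin 0 (Ioi 0)) (nhds (π ^ 4)) := by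
    have hcont : ContinuousAt (fun ε : ℝ => π ^ 4 * (1 / (1 - ε) ^ 4)) 0 := by
      fun_prop (disch := norm_num)
    simpa [thinBound] using hcont.tendsto.mono_left nhdsWithin_le_nhds
  have hmem : ∀ᶠ ε : ℝ in nhdsWithin 0 (Ioi 0), ε ∈ Ioo (0 : ℝ) 1 := Ioo_mem_nhdsGT one_pos
  exact (hmem.and (hlim.eventually_lt_const hη)).exists

section Family

variable {ι : Type*} {l : Filter ι} {Ω : ι → Set E2}

theorem eventually_spectralProduct_le (hne : ∀ k, (Ω k).Nonempty) (hopen : ∀ k, IsOpen (Ω k))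
    (hbd : ∀ k, Bornology.IsBounded (Ω k)) (hconv : ∀ k, Convex ℝ (Ω k))
    (hthin : Tendsto (fun k => (volume (Ω k)).toReal / Metric.diam (Ω k) ^ 2) l (nhds 0))
    {η : ℝ} (hη : π ^ 4 < η) : ∀ᶠ k in l, spectralProduct (Ω k) ≤ η := by
  obtain ⟨ε, hε, hlt⟩ := exists_thinBound_zero_lt hη
  have hcont : Continuous (thinBound ε) := by unfold thinBound; fun_prop
  have hlim := (hcont.tendsto 0).comp (by simpa using hthin.const_mul 64)
  filter_upwards [hlim.eventually_lt_const hlt] with k hk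
  refine (spectralProduct_le_thinBound (hne k) (hopen k) (hbd k) (hconv k) hε).trans ?_
  rw [mul_div_assoc]
  exact hk.le

theorem limsup_estimate_thin_convex_general [l.NeBot] (hne : ∀ k, (Ω k).Nonempty)
    (hopen : ∀ k, IsOpen (Ω k)) (hbd : ∀ k, Bornology.IsBounded (Ω k))
    (hconv : ∀ k, Convex ℝ (Ω k))
    (hthin : Tendsto (fun k => (volume (Ω k)).toReal / Metric.diam (Ω k) ^ 2) l (nhds 0)) :
    limsup (fun k => spectralProduct (Ω k)) l ≤ π ^ 4 ∧
    π ^ 4 < spectralProduct unitDisc ∧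
    ¬ Tendsto (fun k => spectralProduct (Ω k)) l
        (nhds (sSup {r : ℝ | ∃ Ω' : Set E2, Ω'.Nonempty ∧ IsOpen Ω' ∧ Bornology.IsBounded Ω' ∧
          Convex ℝ Ω' ∧ r = spectralProduct Ω'})) := by
  have hle {η : ℝ} (hη : π ^ 4 < η) := eventually_spectralProduct_le hne hopen hbd hconv hthin hη
  refine ⟨le_of_forall_gt_imp_ge_of_dense fun η hη => limsup_le_of_le
    (isCoboundedUnder_le_of_le l fun k => spectralProduct_nonneg (Ω k)) (hle hη),
    pi_pow_four_lt_spectralProduct_unitDisc, fun hlim => ?_⟩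
  refine pi_pow_four_lt_sSup_spectralProduct.not_ge ?_
  exact le_of_forall_gt_imp_ge_of_dense fun η hη => le_of_tendsto hlim (hle hη)

end Family

/-- Estimate (3.7): for a sequence of unit-area bounded open convex plane sets whose diameters
tend to infinity, `limsup λ₁(Ω_k) μ₁(Ω_k) ≤ π⁴`; since `π⁴ < π² λ₁(𝔻) μ₁(𝔻) = F(𝔻)`, such a
sequence cannot be maximizing for `F(Ω) = |Ω|² λ₁(Ω) μ₁(Ω)`. -/
theorem limsup_estimate_thin_convex (Ω : ℕ → Set E2)
    (hne : ∀ k, (Ω k).Nonempty) (hopen : ∀ k, IsOpen (Ω k))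
    (hbd : ∀ k, Bornology.IsBounded (Ω k)) (hconv : ∀ k, Convex ℝ (Ω k))
    (harea : ∀ k, (volume (Ω k)).toReal = 1)
    (hdiam : Tendsto (fun k => Metric.diam (Ω k)) atTop atTop) :
    Filter.limsup (fun k => dEig1 (Ω k) * nEig1 (Ω k)) atTop ≤ π^4 ∧
    π^4 < π^2 * dEig1 unitDisc * nEig1 unitDisc ∧
    ¬ Tendsto (fun k => (volume (Ω k)).toReal^2 * dEig1 (Ω k) * nEig1 (Ω k)) atTop
        (nhds (sSup { r : ℝ | ∃ Ω' : Set E2, Ω'.Nonempty ∧ IsOpen Ω' ∧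
          Bornology.IsBounded Ω' ∧ Convex ℝ Ω' ∧
          r = (volume Ω').toReal^2 * dEig1 Ω' * nEig1 Ω' })) := by
  have hthin : Tendsto (fun k => (volume (Ω k)).toReal / Metric.diam (Ω k) ^ 2) atTop (nhds 0) := by
    simp only [harea]
    exact tendsto_const_nhds.div_atTop ((tendsto_pow_atTop two_ne_zero).comp hdiam)
  simpa [spectralProduct, harea, volume_unitDisc] using
    limsup_estimate_thin_convex_general hne hopen hbd hconv hthin
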